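/- Write λ_b = (λ₁ > λ₂ > ⋯ > λ_ℓ > 0). Then Sp(b) is isomorphic, as a module over the quiver Hecke algebra, to the head (maximal semisimple quotient) of the convolution product Sp((λ_ℓ)) ∘ ⋯ ∘ Sp((λ₂)) ∘ Sp((λ₁)), where Sp((k)) denotes the module Sp(b') for the crystal element b' with λ_{b'} the one-row strict partition (k). -/

import Mathlib

open scoped Classical

namespace QHA

variable (k : Type) [Field k]

/-- Generators of the quiver Hecke algebra `R(β)` on `m` strands with vertex set
`Fin n`: the idempotents `e(ν)`, the polynomial generators `x_p` and the
intertwiners `τ_j` (acting on strands `j`, `j+1`, 0-based). -/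
inductive Gen (n m : ℕ) : Type
  | e (ν : Fin m → Fin n) : Gen n m
  | x (p : Fin m) : Gen n m
  | t (j : ℕ) (h : j + 1 < m) : Gen n m

/-- The free algebra on the generators. -/
abbrev FA (n m : ℕ) := FreeAlgebra k (Gen n m)

variable {n m : ℕ}

noncomputable def Eg (ν : Fin m → Fin n) : FA k n m := FreeAlgebra.ι k (Gen.e ν)
noncomputable def Xg (p : Fin m) : FA k n m := FreeAlgebra.ι k (Gen.x p)
noncomputable def Tg (j : ℕ) (h : j + 1 < m) : FA k n m := FreeAlgebra.ι k (Gen.t j h)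

/-- The transposition of the strands `j`, `j+1` (0-based). -/
def posSwap (j : ℕ) (h : j + 1 < m) : Equiv.Perm (Fin m) :=
  Equiv.swap ⟨j, Nat.lt_of_succ_lt h⟩ ⟨j + 1, h⟩

/-- The place-permutation `s_j ν` of a sequence `ν`. -/
def swapSeq (j : ℕ) (h : j + 1 < m) (ν : Fin m → Fin n) : Fin m → Fin n :=
  ν ∘ posSwap j h

/-- Evaluation of a two-variable polynomial `p(u,v)` at two elements of a
(possibly noncommutative) `k`-algebra, as `Σ t_{p,q} a^p b^q`. -/
noncomputable def eval2 {A : Type} [Ring A] [Algebra k A]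
    (p : MvPolynomial (Fin 2) k) (a b : A) : A :=
  ∑ d ∈ p.support, algebraMap k A (MvPolynomial.coeff d p) * (a ^ d 0 * b ^ d 1)

/-- Evaluation of a three-variable polynomial. -/
noncomputable def eval3 {A : Type} [Ring A] [Algebra k A]
    (p : MvPolynomial (Fin 3) k) (a b c : A) : A :=
  ∑ d ∈ p.support, algebraMap k A (MvPolynomial.coeff d p) * (a ^ d 0 * b ^ d 1 * c ^ d 2)

/-- For `p = Q(u,v)`, the polynomial `(Q(u,v) - Q(w,v))/(u - w)` in the three
variables `u = X 0`, `v = X 1`, `w = X 2` (exact division by the monic `u - w`). -/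
noncomputable def Qbar (p : MvPolynomial (Fin 2) k) : MvPolynomial (Fin 3) k :=
  (MvPolynomial.finSuccEquiv k 2).symm
    (Polynomial.divByMonic
      ((MvPolynomial.finSuccEquiv k 2)
        (MvPolynomial.rename (fun i : Fin 2 => if i = 0 then (0 : Fin 3) else 1) p -
          MvPolynomial.rename (fun i : Fin 2 => if i = 0 then (2 : Fin 3) else 1) p))
      (Polynomial.X - Polynomial.C (MvPolynomial.X 1)))

/-- Admissibility of the family `Q_{i,j}(u,v)` of polynomials with respect to the
(symmetrizable) Cartan matrix `A` and symmetrizing integers `d`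
(so `(α_i, α_j) = d_i A_{i j}`):
`Q_{i,i} = 0`; `Q_{j,i}(u,v) = Q_{i,j}(v,u)`; `Q_{i,j} = 1` whenever `(α_i,α_j) = 0`
(`i ≠ j`); `Q_{i,j}` is supported on `(p,q)` with
`(α_i,α_i) p + (α_j,α_j) q = -2(α_i,α_j)`; and `t_{i,j;-a_{ij},0} ≠ 0`. -/
def QAdmissible (A : Fin n → Fin n → ℤ) (d : Fin n → ℤ)
    (Q : Fin n → Fin n → MvPolynomial (Fin 2) k) : Prop :=
  (∀ i, Q i i = 0) ∧
  (∀ i j, Q j i = MvPolynomial.rename (Equiv.swap (0 : Fin 2) 1) (Q i j)) ∧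
  (∀ i j, i ≠ j → d i * A i j = 0 → Q i j = 1) ∧
  (∀ i j, i ≠ j → ∀ dd ∈ (Q i j).support,
    (2 * d i) * (dd 0 : ℤ) + (2 * d j) * (dd 1 : ℤ) = -2 * (d i * A i j)) ∧
  (∀ i j, i ≠ j →
    MvPolynomial.coeff (Finsupp.single (0 : Fin 2) (-(A i j)).toNat) (Q i j) ≠ 0)

/-- The defining relations of the quiver Hecke algebra `R(β)`, where
`S ⊆ I^m` is the set of admissible sequences (`I^β`; `e(ν) = 0` for `ν ∉ S`). -/
inductive Rel (Q : Fin n → Fin n → MvPolynomial (Fin 2) k) (S : Set (Fin m → Fin n)) :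
    FA k n m → FA k n m → Prop
  | e_orth (ν ν' : Fin m → Fin n) (hne : ν ≠ ν') : Rel Q S (Eg k ν * Eg k ν') 0
  | e_idem (ν : Fin m → Fin n) : Rel Q S (Eg k ν * Eg k ν) (Eg k ν)
  | e_sum : Rel Q S (∑ ν : Fin m → Fin n, Eg k ν) 1
  | e_out (ν : Fin m → Fin n) (hν : ν ∉ S) : Rel Q S (Eg k ν) 0
  | xx (p q : Fin m) : Rel Q S (Xg k p * Xg k q) (Xg k q * Xg k p)
  | xe (p : Fin m) (ν : Fin m → Fin n) : Rel Q S (Xg k p * Eg k ν) (Eg k ν * Xg k p)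
  | te (j : ℕ) (h : j + 1 < m) (ν : Fin m → Fin n) :
      Rel Q S (Tg k j h * Eg k ν) (Eg k (swapSeq j h ν) * Tg k j h)
  | tt (a : ℕ) (ha : a + 1 < m) (b : ℕ) (hb : b + 1 < m) (hab : a + 1 < b ∨ b + 1 < a) :
      Rel Q S (Tg k a ha * Tg k b hb) (Tg k b hb * Tg k a ha)
  | tsq (j : ℕ) (h : j + 1 < m) (ν : Fin m → Fin n) :
      Rel Q S (Tg k j h * Tg k j h * Eg k ν)
        (eval2 k (Q (ν ⟨j, Nat.lt_of_succ_lt h⟩) (ν ⟨j + 1, h⟩))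
          (Xg k ⟨j, Nat.lt_of_succ_lt h⟩) (Xg k ⟨j + 1, h⟩) * Eg k ν)
  | tx_left (j : ℕ) (h : j + 1 < m) (ν : Fin m → Fin n)
      (hv : ν ⟨j, Nat.lt_of_succ_lt h⟩ = ν ⟨j + 1, h⟩) :
      Rel Q S (Tg k j h * Xg k ⟨j, Nat.lt_of_succ_lt h⟩ * Eg k ν)
        (Xg k ⟨j + 1, h⟩ * Tg k j h * Eg k ν - Eg k ν)
  | tx_right (j : ℕ) (h : j + 1 < m) (ν : Fin m → Fin n)
      (hv : ν ⟨j, Nat.lt_of_succ_lt h⟩ = ν ⟨j + 1, h⟩) :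
      Rel Q S (Tg k j h * Xg k ⟨j + 1, h⟩ * Eg k ν)
        (Xg k ⟨j, Nat.lt_of_succ_lt h⟩ * Tg k j h * Eg k ν + Eg k ν)
  | tx_comm (j : ℕ) (h : j + 1 < m) (ν : Fin m → Fin n) (p : Fin m)
      (hcase : ν ⟨j, Nat.lt_of_succ_lt h⟩ ≠ ν ⟨j + 1, h⟩ ∨ ((p : ℕ) ≠ j ∧ (p : ℕ) ≠ j + 1)) :
      Rel Q S (Tg k j h * Xg k p * Eg k ν) (Xg k (posSwap j h p) * Tg k j h * Eg k ν)
  | braid_ne (j : ℕ) (h1 : j + 1 < m) (h2 : j + 2 < m) (ν : Fin m → Fin n)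
      (hv : ν ⟨j, by omega⟩ ≠ ν ⟨j + 2, h2⟩) :
      Rel Q S
        (Tg k (j + 1) (by omega) * Tg k j h1 * Tg k (j + 1) (by omega) * Eg k ν)
        (Tg k j h1 * Tg k (j + 1) (by omega) * Tg k j h1 * Eg k ν)
  | braid_eq (j : ℕ) (h1 : j + 1 < m) (h2 : j + 2 < m) (ν : Fin m → Fin n)
      (hv : ν ⟨j, by omega⟩ = ν ⟨j + 2, h2⟩) :
      Rel Q S
        (Tg k (j + 1) (by omega) * Tg k j h1 * Tg k (j + 1) (by omega) * Eg k ν)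
        (Tg k j h1 * Tg k (j + 1) (by omega) * Tg k j h1 * Eg k ν +
          eval3 k (Qbar k (Q (ν ⟨j, by omega⟩) (ν ⟨j + 1, h1⟩)))
            (Xg k ⟨j, by omega⟩) (Xg k ⟨j + 1, h1⟩) (Xg k ⟨j + 2, h2⟩) * Eg k ν)

/-- The extra cyclotomic relations `x_m^{⟨h_{ν_m}, Λ⟩} e(ν) = 0` (`ν ∈ I^β`),
where `Λ` is written in fundamental-weight coordinates, so `⟨h_i, Λ⟩ = Λ i`. -/
inductive CycRel (Λ : Fin n → ℤ) (S : Set (Fin m → Fin n)) :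
    FA k n m → FA k n m → Prop
  | cyc (ν : Fin m → Fin n) (hν : ν ∈ S) (p : Fin m) (hp : (p : ℕ) + 1 = m) :
      CycRel Λ S (Xg k p ^ (Λ (ν p)).toNat * Eg k ν) 0

/-- Relations of the cyclotomic quiver Hecke algebra `R^Λ(β)`. -/
def CRel (Q : Fin n → Fin n → MvPolynomial (Fin 2) k) (S : Set (Fin m → Fin n))
    (Λ : Fin n → ℤ) : FA k n m → FA k n m → Prop :=
  fun a b => Rel k Q S a b ∨ CycRel k Λ S a b

/-- The `j`-th column of the Cartan matrix: the simple root `α_j` written in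
fundamental-weight coordinates (`⟨h_i, α_j⟩ = A i j`). -/
def αcol (A : Fin n → Fin n → ℤ) (j : Fin n) : Fin n → ℤ := fun i => A i j

/-- `FPath A Λ [i₁, …, i_ℓ] ξ` means `f̃_{i₁} ⋯ f̃_{i_ℓ} Λ = ξ` in the
minuscule crystal realized on the Weyl orbit of `Λ`:
`f̃_j μ = μ - α_j` whenever `⟨h_j, μ⟩ = 1` (and is undefined otherwise). -/
inductive FPath (A : Fin n → Fin n → ℤ) (Λ : Fin n → ℤ) :
    List (Fin n) → (Fin n → ℤ) → Prop
  | nil : FPath A Λ [] Λ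
  | cons (j : Fin n) (l : List (Fin n)) (ξ : Fin n → ℤ) :
      FPath A Λ l ξ → ξ j = 1 → FPath A Λ (j :: l) (ξ - αcol A j)

/-- The simple reflection `s_j μ = μ - ⟨h_j, μ⟩ α_j` on the weight lattice. -/
def sRef (A : Fin n → Fin n → ℤ) (j : Fin n) (μ : Fin n → ℤ) : Fin n → ℤ :=
  fun i => μ i - μ j * A i j

/-- The Weyl group orbit of `Λ` (the Weyl group being generated by the
involutions `s_j`, its orbit consists of images under words in the `s_j`). -/
def orbitW (A : Fin n → Fin n → ℤ) (Λ : Fin n → ℤ) : Set (Fin n → ℤ) :=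
  {ξ | ∃ l : List (Fin n), l.foldr (sRef A) Λ = ξ}

end QHA

namespace QHA

variable (k : Type) [Field k]

/-- The Cartan matrix of type `Bₙ` (0-based labeling; the first node carries the
short simple root: `a_{1,2} = -2`, `a_{2,1} = -1` in 1-based labels, and
`1 — 2 — ⋯ — n` is a chain). -/
def AB (n : ℕ) : Fin n → Fin n → ℤ := fun i j =>
  if i = j then 2
  else if (i : ℕ) = 0 ∧ (j : ℕ) = 1 then -2
  else if (i : ℕ) + 1 = (j : ℕ) ∨ (j : ℕ) + 1 = (i : ℕ) then -1
  else 0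

/-- The symmetrizing integers of type `Bₙ`: `d₁ = 1` and `d_i = 2` for `i ≥ 2`. -/
def dB (n : ℕ) : Fin n → ℤ := fun i => if (i : ℕ) = 0 then 1 else 2

/-- The shifted Young diagram of a strict partition `l = (λ₁ > λ₂ > ⋯)`,
as the set of (1-based) boxes `(i,j)` with `1 ≤ i ≤ ℓ`, `i ≤ j ≤ λᵢ + i - 1`. -/
def diagram (l : List ℕ) : Set (ℕ × ℕ) :=
  {b | b.1 - 1 < l.length ∧ 1 ≤ b.1 ∧ b.1 ≤ b.2 ∧ b.2 + 1 ≤ l.getD (b.1 - 1) 0 + b.1}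

/-- The shifted Young diagram as a finset. -/
def diagFinset (l : List ℕ) : Finset (ℕ × ℕ) :=
  (Finset.range l.length).biUnion fun i =>
    (Finset.Icc (i + 1) (l.getD i 0 + i)).image fun j => (i + 1, j)

/-- The residue `res(i,j) = j - i + 1` of a box. -/
def resBox (b : ℕ × ℕ) : ℕ := b.2 + 1 - b.1

/-- The residue of a box as an element of `I = Fin n` (`0`-based:
the box `(i,j)` has `0`-based residue `j - i`). -/
def resFin (n : ℕ) (hn : 0 < n) (b : ℕ × ℕ) : Fin n :=
  ⟨min (b.2 - b.1) (n - 1), by omega⟩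

/-- `f : Fin N → ℕ × ℕ` is a standard tableau of shifted shape `l`, where `f k` is
the box containing the entry `k+1`. -/
def IsSYT (l : List ℕ) (N : ℕ) (f : Fin N → ℕ × ℕ) : Prop :=
  Function.Injective f ∧ Set.range f = diagram l ∧
    (∀ a b : Fin N, (f a).1 = (f b).1 → (f a).2 < (f b).2 → a < b) ∧
    (∀ a b : Fin N, (f a).2 = (f b).2 → (f a).1 < (f b).1 → a < b)

/-- The residue sequence `res(T) = (res(b_N), …, res(b₁)) ∈ I^N` of a tableau. -/
def resSeq (n : ℕ) (hn : 0 < n) {N : ℕ} (f : Fin N → ℕ × ℕ) : Fin N → Fin n :=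
  fun p => resFin n hn (f p.rev)

/-- The weight `wt(λ) = Λ₁ - Σ_{b ∈ λ} α_{res(b)}`, in fundamental-weight
coordinates, of type `Bₙ`. -/
noncomputable def wtP (n : ℕ) (hn : 0 < n) (l : List ℕ) : Fin n → ℤ :=
  Pi.single ⟨0, hn⟩ 1 - ∑ b ∈ diagFinset l, αcol (AB n) (resFin n hn b)

/-- Exchanging in `T` the entries occupying positions `j`, `j+1` of the residue
sequence, i.e. the entries `N-j` and `N-j-1`. -/
def swapEnt {N : ℕ} (j : ℕ) (h : j + 1 < N) (f : Fin N → ℕ × ℕ) : Fin N → ℕ × ℕ :=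
  f ∘ Equiv.swap (Fin.rev ⟨j, Nat.lt_of_succ_lt h⟩) (Fin.rev ⟨j + 1, h⟩)

section Ops

variable {N : ℕ} (n : ℕ) (hn : 0 < n) (P : (Fin N → ℕ × ℕ) → Prop)

/-- The vector space with basis the tableaux satisfying `P`. -/
abbrev TabV : Type := {f : Fin N → ℕ × ℕ // P f} → k

/-- The prescribed action of `e(μ)`: projection onto the span of the tableaux
with residue sequence `μ`. -/
noncomputable def eOpTab (μ : Fin N → Fin n) : Module.End k (TabV k P) :=
  LinearMap.pi fun T => if resSeq n hn T.val = μ then LinearMap.proj T else 0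

/-- The prescribed action of `τ_j`: `T ↦ s_j T` if `s_j T` still satisfies `P`,
and `0` otherwise. -/
noncomputable def tOpTab (j : ℕ) (h : j + 1 < N) : Module.End k (TabV k P) :=
  LinearMap.pi fun T =>
    if hh : P (swapEnt j h T.val) then
      LinearMap.proj (⟨swapEnt j h T.val, hh⟩ : {f : Fin N → ℕ × ℕ // P f}) else 0

end Ops

section
variable {n : ℕ} (A : Fin n → Fin n → ℤ) (Λ ξ : Fin n → ℤ) (ℓ : ℕ)

/-- `I^β` for `β = Λ - ξ`. -/
def Iβ : Set (Fin ℓ → Fin n) :=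
  {ν | ∑ p : Fin ℓ, αcol A (ν p) = fun i => Λ i - ξ i}
end

end QHA

namespace QHA

section Conv

variable (k : Type) [Field k] (n : ℕ) (hn : 0 < n)
  (Q : Fin n → Fin n → MvPolynomial (Fin 2) k) (l : List ℕ)

/-- The convolution product `Sp((λ_ℓ)) ∘ ⋯ ∘ Sp((λ₂)) ∘ Sp((λ₁))` is induced from
the outer tensor product of the one-dimensional modules `Sp((λ_t))` over the tensor
product of the block subalgebras.  The `t`-th block (0-based, `t < ℓ`) occupies the
positions `blockStart t, …, blockStart t + blockSize t - 1`, where the blocks are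
ordered `λ_ℓ, …, λ₂, λ₁`. -/
def blockStart (t : ℕ) : ℕ := (l.reverse.take t).sum

def blockSize (t : ℕ) : ℕ := l.reverse.getD t 0

/-- The residue sequence of the unique standard tableau of the one-row shape
`(blockSize t)`: position `q` is occupied by the box `(1, blockSize t - q)`. -/
def localRes (t : ℕ) (q : Fin (blockSize l t)) : Fin n :=
  resFin n hn (1, blockSize l t - (q : ℕ))

/-- `ν` agrees with the local sequence `μ` on the `t`-th block. -/
def BlockMatch (t : ℕ) (μ : Fin (blockSize l t) → Fin n)
    (ν : Fin l.sum → Fin n) : Prop :=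
  ∀ (q : Fin (blockSize l t)) (hq : blockStart l t + (q : ℕ) < l.sum),
    ν ⟨blockStart l t + (q : ℕ), hq⟩ = μ q

/-- The image of the idempotent `e(μ)` of the `t`-th block subalgebra in `R(β)`:
`Σ e(ν)`, the sum over the `ν` agreeing with `μ` on the block. -/
noncomputable def imgE (t : ℕ) (μ : Fin (blockSize l t) → Fin n) :
    RingQuot (Rel k Q (Set.univ : Set (Fin l.sum → Fin n))) :=
  RingQuot.mkAlgHom k (Rel k Q (Set.univ : Set (Fin l.sum → Fin n)))
    (∑ ν ∈ Finset.univ.filter (BlockMatch n l t μ), Eg k ν)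

/-- Positions `j` and `j+1` lie in a common block. -/
def sameBlock (j : ℕ) : Prop :=
  ∃ t, blockStart l t ≤ j ∧ j + 1 < blockStart l t + blockSize l t

/-- The left ideal presenting the convolution product
`R(β)e(β_ℓ,…,β₁) ⊗_{R(β_ℓ) ⊗ ⋯ ⊗ R(β₁)} (Sp((λ_ℓ)) ⊠ ⋯ ⊠ Sp((λ₁)))` as a cyclic
left `R(β)`-module: each generator of a block subalgebra, minus the scalar by which
it acts on the corresponding one-dimensional module `Sp((λ_t))`, is annihilated. -/
noncomputable def convIdeal :
    Submodule (RingQuot (Rel k Q (Set.univ : Set (Fin l.sum → Fin n))))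
      (RingQuot (Rel k Q (Set.univ : Set (Fin l.sum → Fin n)))) :=
  Submodule.span _
    ({z | ∃ (t : ℕ) (_ : t < l.length) (μ : Fin (blockSize l t) → Fin n),
        z = imgE k n Q l t μ -
          (if (∀ q, μ q = localRes n hn l t q) then 1 else 0)} ∪
     {z | ∃ p : Fin l.sum,
        z = RingQuot.mkAlgHom k (Rel k Q (Set.univ : Set (Fin l.sum → Fin n))) (Xg k p)} ∪
     {z | ∃ (j : ℕ) (h : j + 1 < l.sum), sameBlock l j ∧
        z = RingQuot.mkAlgHom k (Rel k Q (Set.univ : Set (Fin l.sum → Fin n))) (Tg k j h)})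

/-- The convolution product `Sp((λ_ℓ)) ∘ ⋯ ∘ Sp((λ₂)) ∘ Sp((λ₁))` as a cyclic left
module over the quiver Hecke algebra. -/
noncomputable def ConvMod : Type :=
  RingQuot (Rel k Q (Set.univ : Set (Fin l.sum → Fin n))) ⧸ convIdeal k n hn Q l

noncomputable instance : AddCommGroup (ConvMod k n hn Q l) :=
  inferInstanceAs (AddCommGroup
    (RingQuot (Rel k Q (Set.univ : Set (Fin l.sum → Fin n))) ⧸ convIdeal k n hn Q l))

noncomputable instance : Module (RingQuot (Rel k Q (Set.univ : Set (Fin l.sum → Fin n))))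
    (ConvMod k n hn Q l) :=
  inferInstanceAs (Module _
    (RingQuot (Rel k Q (Set.univ : Set (Fin l.sum → Fin n))) ⧸ convIdeal k n hn Q l))

/-- The radical of the convolution product: the intersection of its maximal
submodules. -/
noncomputable def convRad :
    Submodule (RingQuot (Rel k Q (Set.univ : Set (Fin l.sum → Fin n))))
      (ConvMod k n hn Q l) :=
  sInf {U | IsCoatom U}

/-- The head (largest semisimple quotient) of the convolution product. -/
noncomputable def ConvHead : Type := ConvMod k n hn Q l ⧸ convRad k n hn Q l

noncomputable instance : AddCommGroup (ConvHead k n hn Q l) :=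
  inferInstanceAs (AddCommGroup (ConvMod k n hn Q l ⧸ convRad k n hn Q l))

noncomputable instance : Module (RingQuot (Rel k Q (Set.univ : Set (Fin l.sum → Fin n))))
    (ConvHead k n hn Q l) :=
  inferInstanceAs (Module _ (ConvMod k n hn Q l ⧸ convRad k n hn Q l))

end Conv

/-! Over the quiver Hecke algebra `R`, the convolution product is a cyclic module `R ⧸ I`, whose
generator lies in the `e(ν₀)`-part, `ν₀` being the residue sequence of the row-reading tableau.
The key fact is that this part is one-dimensional: `e(ν₀) R ⊆ k + I`.  Modulo `I` and shorter
products, only those products of the `τ_j` survive in `e(ν₀) R` whose permutation fixes `ν₀` and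
has no descent inside a block, so that it is a shuffle of the blocks.  Each block ends with its
only (0-based) residue `0` and, the parts being strictly decreasing, the next block starts with a
residue larger than all earlier ones, so such a shuffle is the identity.

The generator maps to the row-reading tableau of `Sp(b)`, which generates `Sp(b)` because
exchanging consecutive entries connects all standard tableaux.  Residue sequences separate
standard tableaux, so every nonzero vector of `Sp(b)` generates each basis vector in turn.  A
submodule not contained in the kernel of `R ⧸ I → Sp(b)` therefore has an `e(ν₀)`-component with
nonzero image, which is a nonzero multiple of the generator.  Hence the kernel contains every
proper submodule: it is the radical, and the head is `Sp(b)`. -/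

/-! ### Descents of permutations -/

section Descents

variable {m : ℕ}

/-- `j` is a descent of the permutation `f`, written in one-line notation. -/
def IsDescent (f : Equiv.Perm (Fin m)) (j : ℕ) (h : j + 1 < m) : Prop :=
  f ⟨j + 1, h⟩ < f ⟨j, Nat.lt_of_succ_lt h⟩

theorem posSwap_mul_self (j : ℕ) (h : j + 1 < m) : posSwap j h * posSwap j h = 1 :=
  Equiv.swap_mul_self _ _

theorem mul_posSwap_cancel_right (f : Equiv.Perm (Fin m)) (j : ℕ) (h : j + 1 < m) :
    f * posSwap j h * posSwap j h = f := by
  rw [mul_assoc, posSwap_mul_self, mul_one]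

theorem posSwap_apply_of_ne {j : ℕ} {h : j + 1 < m} {p : Fin m} (hj : (p : ℕ) ≠ j)
    (hj' : (p : ℕ) ≠ j + 1) : posSwap j h p = p :=
  Equiv.swap_apply_of_ne_of_ne (Fin.ne_of_val_ne hj) (Fin.ne_of_val_ne hj')

theorem posSwap_apply_left (j : ℕ) (h : j + 1 < m) :
    posSwap j h ⟨j, Nat.lt_of_succ_lt h⟩ = ⟨j + 1, h⟩ :=
  Equiv.swap_apply_left _ _

theorem posSwap_apply_right (j : ℕ) (h : j + 1 < m) :
    posSwap j h ⟨j + 1, h⟩ = ⟨j, Nat.lt_of_succ_lt h⟩ :=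
  Equiv.swap_apply_right _ _

theorem posSwap_comm {i j : ℕ} (hi : i + 1 < m) (hj : j + 1 < m)
    (hij : i + 1 < j ∨ j + 1 < i) :
    posSwap i hi * posSwap j hj = posSwap j hj * posSwap i hi :=
  (Equiv.Perm.disjoint_swap_swap (by simp; omega)).commute

theorem posSwap_braid {i j : ℕ} (hi : i + 1 < m) (hj : j + 1 < m)
    (hij : i + 1 = j ∨ j + 1 = i) :
    posSwap i hi * posSwap j hj * posSwap i hi = posSwap j hj * posSwap i hi * posSwap j hj := by
  wlog hlt : i + 1 = j generalizing i j
  · exact (this hj hi hij.symm (hij.resolve_left hlt)).symm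
  subst hlt
  have braid {a b c : Fin m} (hab : a ≠ b) (hac : a ≠ c) (hbc : b ≠ c) :
      Equiv.swap a b * Equiv.swap b c * Equiv.swap a b =
        Equiv.swap b c * Equiv.swap a b * Equiv.swap b c := by
    rw [Equiv.swap_mul_swap_mul_swap hab hac, Equiv.swap_comm a b, Equiv.swap_comm b c,
      Equiv.swap_mul_swap_mul_swap hbc.symm hac.symm, Equiv.swap_comm]
  exact braid (by simp) (by simp; omega) (by simp)

theorem not_isDescent_one (j : ℕ) (h : j + 1 < m) : ¬IsDescent 1 j h := by
  simp [IsDescent]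

theorem isDescent_mul_posSwap_self {f : Equiv.Perm (Fin m)} {j : ℕ} {h : j + 1 < m}
    (hf : ¬IsDescent f j h) : IsDescent (f * posSwap j h) j h := by
  simp only [IsDescent, Equiv.Perm.mul_apply, posSwap_apply_left, posSwap_apply_right]
  refine lt_of_le_of_ne (not_lt.mp hf) fun heq => ?_
  simpa using f.injective heq

theorem isDescent_mul_posSwap_of_far {f : Equiv.Perm (Fin m)} {i j : ℕ} {hi : i + 1 < m}
    {hj : j + 1 < m} (hij : i + 1 < j ∨ j + 1 < i) (hf : IsDescent f j hj) :
    IsDescent (f * posSwap i hi) j hj := by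
  simp only [IsDescent, Equiv.Perm.mul_apply]
  rwa [posSwap_apply_of_ne (by grind) (by grind),
    posSwap_apply_of_ne (by grind) (by grind)]

theorem isDescent_mul_posSwap_of_adjacent {f : Equiv.Perm (Fin m)} {i j : ℕ} {hi : i + 1 < m}
    {hj : j + 1 < m} (hij : i + 1 = j ∨ j + 1 = i) (hfi : IsDescent f i hi)
    (hfj : IsDescent f j hj) : IsDescent (f * posSwap i hi) j hj := by
  rcases hij with rfl | rfl
  · simp only [IsDescent, Equiv.Perm.mul_apply, posSwap_apply_right] at *
    rw [posSwap_apply_of_ne (by grind) (by grind)]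
    exact hfj.trans hfi
  · simp only [IsDescent, Equiv.Perm.mul_apply, posSwap_apply_left] at *
    rw [posSwap_apply_of_ne (by grind) (by grind)]
    exact hfi.trans hfj

theorem isDescent_mul_posSwap_mul_posSwap {f : Equiv.Perm (Fin m)} {i j : ℕ} {hi : i + 1 < m}
    {hj : j + 1 < m} (hij : i + 1 = j ∨ j + 1 = i) (hfj : IsDescent f j hj) :
    IsDescent (f * posSwap i hi * posSwap j hj) i hi := by
  rcases hij with rfl | rfl
  · simp only [IsDescent, Equiv.Perm.mul_apply, posSwap_apply_left] at *
    rw [posSwap_apply_of_ne (j := i + 1) (by grind) (by grind), posSwap_apply_left,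
      posSwap_apply_of_ne (by grind) (by grind)]
    exact hfj
  · simp only [IsDescent, Equiv.Perm.mul_apply, posSwap_apply_right] at *
    rw [posSwap_apply_of_ne (j := j) (by grind) (by grind), posSwap_apply_right,
      posSwap_apply_of_ne (by grind) (by grind)]
    exact hfj

end Descents

/-! ### Leading permutations in nil-Hecke-like algebras -/

section Filtration

variable {k R : Type*} [CommRing k] [Ring R] [Algebra k R] {m : ℕ}

/-- The elements `T₀, …, T_{m-2}` satisfy the Coxeter commutation and braid relations, square
to zero, and commute with `P`, all modulo terms with fewer factors `T_j`.  The quiver Hecke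
algebra, with `P` generated by the idempotents and the polynomial generators, is the
motivating example. -/
structure IsNilHecke (P : Subalgebra k R) (T : ∀ j, j + 1 < m → R) : Prop where
  comm (i j : ℕ) (hi : i + 1 < m) (hj : j + 1 < m) (hij : i + 1 < j ∨ j + 1 < i) :
    T i hi * T j hj = T j hj * T i hi
  sq_mem (j : ℕ) (h : j + 1 < m) : T j h * T j h ∈ P
  braid_mem (i j : ℕ) (hi : i + 1 < m) (hj : j + 1 < m) (hij : i + 1 = j ∨ j + 1 = i) :
    T i hi * T j hj * T i hi - T j hj * T i hi * T j hj ∈ P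
  mul_mem (j : ℕ) (h : j + 1 < m) (p : R) (hp : p ∈ P) : ∃ p' ∈ P, T j h * p - p' * T j h ∈ P

variable (P : Subalgebra k R) (T : ∀ j, j + 1 < m → R)

/-- The span of the products `p T_{j₁} ⋯ T_{jₛ}` with `p ∈ P` and `s < r`. -/
def short : ℕ → Submodule k R
  | 0 => ⊥
  | r + 1 => short r ⊔ Subalgebra.toSubmodule P ⊔
      ⨆ (j : ℕ) (h : j + 1 < m), (short r).map (LinearMap.mulRight k (T j h))

/-- Together with `short P T (r - 1)`, the span of the products `p T_{j₁} ⋯ T_{jₛ}` with `p ∈ P`,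
`s < r` and `s_{j₁} ⋯ s_{jₛ} = f`.  The word is not required to be reduced. -/
noncomputable def lead : ℕ → Equiv.Perm (Fin m) → Submodule k R
  | 0, _ => ⊥
  | r + 1, f => short P T r ⊔ (if f = 1 then Subalgebra.toSubmodule P else ⊥) ⊔
      ⨆ (j : ℕ) (h : j + 1 < m), (lead r (f * posSwap j h)).map (LinearMap.mulRight k (T j h))

variable {P T}

theorem short_le_short_succ (r : ℕ) : short P T r ≤ short P T (r + 1) :=
  le_sup_left.trans le_sup_left

theorem short_mono : Monotone (short P T) :=
  monotone_nat_of_le_succ short_le_short_succ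

theorem toSubmodule_le_short_succ (r : ℕ) : Subalgebra.toSubmodule P ≤ short P T (r + 1) :=
  le_sup_right.trans le_sup_left

theorem mul_mem_short_succ {r : ℕ} {u : R} (hu : u ∈ short P T r) (j : ℕ) (h : j + 1 < m) :
    u * T j h ∈ short P T (r + 1) := by
  have hle : (short P T r).map (LinearMap.mulRight k (T j h)) ≤ short P T (r + 1) :=
    le_sup_of_le_right (le_iSup₂_of_le j h le_rfl)
  exact hle (Submodule.mem_map_of_mem hu)

theorem mul_mem_short {r : ℕ} {u : R} (hu : u ∈ short P T (r - 1)) (j : ℕ) (h : j + 1 < m) :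
    u * T j h ∈ short P T r := by
  cases r with
  | zero => simp_all [short]
  | succ r => exact mul_mem_short_succ hu j h

theorem mul_mem_short_left {r : ℕ} {p u : R} (hp : p ∈ P) (hu : u ∈ short P T r) :
    p * u ∈ short P T r := by
  suffices short P T r ≤ (short P T r).comap (LinearMap.mulLeft k p) from this hu
  clear hu u
  induction r with
  | zero => exact bot_le
  | succ r ih =>
    refine sup_le (sup_le (ih.trans ?_) ?_) (iSup₂_le fun j h => ?_)
    · exact Submodule.comap_mono (short_le_short_succ r)
    · exact fun q hq => toSubmodule_le_short_succ r (P.mul_mem hp hq)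
    · rintro _ ⟨v, hv, rfl⟩
      simpa only [Submodule.mem_comap, LinearMap.mulLeft_apply, LinearMap.mulRight_apply,
        mul_assoc] using mul_mem_short_succ (ih hv) j h

theorem short_le_lead_succ (r : ℕ) (f : Equiv.Perm (Fin m)) :
    short P T r ≤ lead P T (r + 1) f :=
  le_sup_left.trans le_sup_left

theorem mul_mem_lead_succ {r : ℕ} {f : Equiv.Perm (Fin m)} {u : R} (hu : u ∈ lead P T r f)
    (j : ℕ) (h : j + 1 < m) : u * T j h ∈ lead P T (r + 1) (f * posSwap j h) := by
  have hle : (lead P T r (f * posSwap j h * posSwap j h)).map (LinearMap.mulRight k (T j h)) ≤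
      lead P T (r + 1) (f * posSwap j h) :=
    le_sup_of_le_right (le_iSup₂_of_le j h le_rfl)
  rw [mul_posSwap_cancel_right] at hle
  exact hle (Submodule.mem_map_of_mem hu)

theorem mul_mem_lead {r : ℕ} {f : Equiv.Perm (Fin m)} {u : R} (hu : u ∈ lead P T (r - 1) f)
    (j : ℕ) (h : j + 1 < m) : u * T j h ∈ lead P T r (f * posSwap j h) := by
  cases r with
  | zero => simp_all [lead]
  | succ r => exact mul_mem_lead_succ hu j h

theorem lead_le_short (r : ℕ) (f : Equiv.Perm (Fin m)) : lead P T r f ≤ short P T r := by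
  induction r generalizing f with
  | zero => exact le_rfl
  | succ r ih =>
    refine sup_le_sup (sup_le_sup_left ?_ _) (iSup₂_mono fun j h => Submodule.map_mono (ih _))
    split_ifs
    exacts [le_rfl, bot_le]

theorem short_le_iSup_lead (r : ℕ) : short P T r ≤ ⨆ f, lead P T r f := by
  induction r with
  | zero => exact bot_le
  | succ r ih =>
    refine sup_le (sup_le (le_iSup_of_le 1 (short_le_lead_succ r 1)) ?_) (iSup₂_le fun j h => ?_)
    · refine le_iSup_of_le 1 (le_sup_of_le_left (le_sup_of_le_right ?_))
      rw [if_pos rfl]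
    · refine (Submodule.map_mono ih).trans ?_
      rw [Submodule.map_iSup]
      refine iSup_le fun f => le_iSup_of_le (f * posSwap j h) ?_
      rintro _ ⟨u, hu, rfl⟩
      exact mul_mem_lead_succ hu j h

namespace IsNilHecke

variable (hT : IsNilHecke P T)
include hT

theorem mul_mem_short_of_mem {r : ℕ} {u p : R} (hu : u ∈ short P T r) (hp : p ∈ P) :
    u * p ∈ short P T r := by
  suffices short P T r ≤ (short P T r).comap (LinearMap.mulRight k p) from this hu
  clear hu u
  induction r generalizing p with
  | zero => exact bot_le
  | succ r ih =>
    refine sup_le (sup_le ((ih hp).trans ?_) ?_) (iSup₂_le fun j h => ?_)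
    · exact Submodule.comap_mono (short_le_short_succ r)
    · exact fun q hq => toSubmodule_le_short_succ r (P.mul_mem hq hp)
    · rintro _ ⟨v, hv, rfl⟩
      obtain ⟨p', hp', hmod⟩ := hT.mul_mem j h p hp
      have hsplit : v * T j h * p = v * p' * T j h + v * (T j h * p - p' * T j h) := by
        noncomm_ring
      simp only [Submodule.mem_comap, LinearMap.mulRight_apply, hsplit]
      exact add_mem (mul_mem_short_succ (ih hp' hv) j h)
        (short_le_short_succ r (ih hmod hv))

theorem mul_mem_short_of_sub_mul_mem {r j : ℕ} {h : j + 1 < m} {u w : R}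
    (hw : w ∈ short P T (r - 1)) (hu : u - w * T j h ∈ short P T (r - 1)) :
    u * T j h ∈ short P T r := by
  have hsplit : u * T j h = (u - w * T j h) * T j h + w * (T j h * T j h) := by noncomm_ring
  rw [hsplit]
  exact add_mem (mul_mem_short hu j h)
    (short_mono (Nat.sub_le r 1) (hT.mul_mem_short_of_mem hw (hT.sq_mem j h)))

theorem exists_sub_mul_mem_short_of_far {r i j : ℕ} {hi : i + 1 < m} {hj : j + 1 < m}
    (hij : i + 1 < j ∨ j + 1 < i) {f : Equiv.Perm (Fin m)} {v w : R}
    (hw : w ∈ lead P T (r - 1) (f * posSwap i hi * posSwap j hj))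
    (hv : v - w * T j hj ∈ short P T (r - 1)) :
    ∃ w' ∈ lead P T r (f * posSwap j hj), v * T i hi - w' * T j hj ∈ short P T r := by
  refine ⟨w * T i hi, ?_, ?_⟩
  · have hperm : f * posSwap i hi * posSwap j hj * posSwap i hi = f * posSwap j hj := by
      rw [mul_assoc f, posSwap_comm hi hj hij, ← mul_assoc, mul_posSwap_cancel_right]
    exact hperm ▸ mul_mem_lead hw i hi
  · have hsplit : v * T i hi - w * T i hi * T j hj = (v - w * T j hj) * T i hi := by
      rw [mul_assoc, hT.comm i j hi hj hij, sub_mul, mul_assoc]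
    exact hsplit ▸ mul_mem_short hv i hi

theorem exists_sub_mul_mem_short_of_adjacent {r i j : ℕ} {hi : i + 1 < m} {hj : j + 1 < m}
    (hij : i + 1 = j ∨ j + 1 = i) {f : Equiv.Perm (Fin m)} {v w w₂ : R}
    (hw₂ : w₂ ∈ lead P T (r - 1 - 1) (f * posSwap i hi * posSwap j hj * posSwap i hi))
    (hw : w - w₂ * T i hi ∈ short P T (r - 1 - 1)) (hv : v - w * T j hj ∈ short P T (r - 1)) :
    ∃ w' ∈ lead P T r (f * posSwap j hj), v * T i hi - w' * T j hj ∈ short P T r := by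
  refine ⟨w₂ * T j hj * T i hi, ?_, ?_⟩
  · have hperm : f * posSwap i hi * posSwap j hj * posSwap i hi * posSwap j hj * posSwap i hi =
        f * posSwap j hj := by
      rw [mul_assoc f, mul_assoc f, posSwap_braid hi hj hij]
      simp only [← mul_assoc, mul_posSwap_cancel_right]
    exact hperm ▸ mul_mem_lead (mul_mem_lead hw₂ j hj) i hi
  · have hsplit : v * T i hi - w₂ * T j hj * T i hi * T j hj =
        (v - w * T j hj) * T i hi + (w - w₂ * T i hi) * T j hj * T i hi +
          w₂ * (T i hi * T j hj * T i hi - T j hj * T i hi * T j hj) := by noncomm_ring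
    rw [hsplit]
    refine add_mem (add_mem (mul_mem_short hv i hi) (mul_mem_short (mul_mem_short hw j hj) i hi))
      (hT.mul_mem_short_of_mem ?_ (hT.braid_mem i j hi hj hij))
    exact short_mono (by omega) (lead_le_short _ _ hw₂)

/-- The exchange property of the symmetric group, lifted to the filtration: the last factor can
be moved to any descent of the leading permutation. -/
theorem exists_sub_mul_mem_short (r : ℕ) {f : Equiv.Perm (Fin m)} {j : ℕ} {hj : j + 1 < m}
    (hf : IsDescent f j hj) {u : R} (hu : u ∈ lead P T r f) :
    ∃ w ∈ lead P T (r - 1) (f * posSwap j hj), u - w * T j hj ∈ short P T (r - 1) := by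
  induction r using Nat.strong_induction_on generalizing f j u with | _ r ih
  rcases r with _ | r
  · exact ⟨0, zero_mem _, by simpa using lead_le_short 0 f hu⟩
  suffices hle : lead P T (r + 1) f ≤
      (lead P T r (f * posSwap j hj)).map (LinearMap.mulRight k (T j hj)) ⊔ short P T r by
    obtain ⟨_, ⟨w, hw, rfl⟩, s, hs, rfl⟩ := Submodule.mem_sup.mp (hle hu)
    exact ⟨w, hw, by simpa using hs⟩
  refine sup_le (sup_le le_sup_right ?_) (iSup₂_le fun i hi => ?_)
  · rw [if_neg]
    · exact bot_le
    · rintro rfl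
      exact not_isDescent_one j hj hf
  rintro _ ⟨v, hv, rfl⟩
  suffices ∃ w ∈ lead P T r (f * posSwap j hj), v * T i hi - w * T j hj ∈ short P T r by
    obtain ⟨w, hw, hs⟩ := this
    exact Submodule.mem_sup.mpr ⟨_, ⟨w, hw, rfl⟩, _, hs, add_sub_cancel _ _⟩
  by_cases hfi : IsDescent f i hi
  · rcases eq_or_ne i j with rfl | hne
    · exact ⟨v, hv, by simp⟩
    rcases (by omega : (i + 1 < j ∨ j + 1 < i) ∨ (i + 1 = j ∨ j + 1 = i)) with hij | hij
    · obtain ⟨w, hw, hs⟩ := ih r r.lt_succ_self (isDescent_mul_posSwap_of_far hij hf) hv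
      exact hT.exists_sub_mul_mem_short_of_far hij hw hs
    · obtain ⟨w, hw, hs⟩ :=
        ih r r.lt_succ_self (isDescent_mul_posSwap_of_adjacent hij hfi hf) hv
      obtain ⟨w₂, hw₂, hs₂⟩ :=
        ih (r - 1) (by omega) (isDescent_mul_posSwap_mul_posSwap hij hf) hw
      exact hT.exists_sub_mul_mem_short_of_adjacent hij hw₂ hs₂ hs
  · obtain ⟨w, hw, hs⟩ := ih r r.lt_succ_self (isDescent_mul_posSwap_self hfi) hv
    refine ⟨0, zero_mem _, ?_⟩
    simpa using hT.mul_mem_short_of_sub_mul_mem (lead_le_short _ _ hw) hs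

theorem mul_mem_short_of_isDescent {r : ℕ} {f : Equiv.Perm (Fin m)} {j : ℕ} {hj : j + 1 < m}
    (hf : IsDescent f j hj) {u : R} (hu : u ∈ lead P T r f) : u * T j hj ∈ short P T r :=
  have ⟨_, hw, hs⟩ := hT.exists_sub_mul_mem_short r hf hu
  hT.mul_mem_short_of_sub_mul_mem (lead_le_short _ _ hw) hs

theorem lead_succ_one_le (r : ℕ) :
    lead P T (r + 1) 1 ≤ short P T r ⊔ Subalgebra.toSubmodule P := by
  refine sup_le (sup_le_sup_left ?_ _) (iSup₂_le fun j h => le_sup_of_le_left ?_)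
  · rw [if_pos rfl]
  · rintro _ ⟨u, hu, rfl⟩
    exact hT.mul_mem_short_of_isDescent (isDescent_mul_posSwap_self (not_isDescent_one j h)) hu

theorem exists_mem_short
    (hgen : Algebra.adjoin k ((P : Set R) ∪ {t | ∃ (j : ℕ) (h : j + 1 < m), t = T j h}) = ⊤)
    (a : R) : ∃ r, a ∈ short P T r := by
  suffices ∀ r, ∀ u ∈ short P T r, ∃ r', u * a ∈ short P T r' by
    simpa using this 1 1 (toSubmodule_le_short_succ 0 P.one_mem)
  have ha : a ∈ Algebra.adjoin k ((P : Set R) ∪ {t | ∃ (j : ℕ) (h : j + 1 < m), t = T j h}) :=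
    hgen ▸ Algebra.mem_top
  induction ha using Algebra.adjoin_induction with
  | mem a ha =>
    intro r u hu
    obtain hp | ⟨j, h, rfl⟩ := ha
    · exact ⟨r, hT.mul_mem_short_of_mem hu hp⟩
    · exact ⟨r + 1, mul_mem_short_succ hu j h⟩
  | algebraMap c => exact fun r u hu => ⟨r, hT.mul_mem_short_of_mem hu (P.algebraMap_mem c)⟩
  | add a b _ _ iha ihb =>
    intro r u hu
    obtain ⟨r₁, h₁⟩ := iha r u hu
    obtain ⟨r₂, h₂⟩ := ihb r u hu
    refine ⟨max r₁ r₂, ?_⟩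
    rw [mul_add]
    exact add_mem (short_mono (le_max_left _ _) h₁) (short_mono (le_max_right _ _) h₂)
  | mul a b _ _ iha ihb =>
    intro r u hu
    obtain ⟨r₁, h₁⟩ := iha r u hu
    simpa only [mul_assoc] using ihb r₁ _ h₁

end IsNilHecke

end Filtration

/-! ### Quiver Hecke algebras -/

section Eval

variable {k : Type} [Field k] {A B : Type} [Ring A] [Algebra k A] [Ring B] [Algebra k B]

theorem map_eval2_mem (φ : A →ₐ[k] B) {S : Subalgebra k B} (p : MvPolynomial (Fin 2) k) {a b : A}
    (ha : φ a ∈ S) (hb : φ b ∈ S) : φ (eval2 k p a b) ∈ S := by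
  simp only [eval2, map_sum, map_mul, map_pow, AlgHom.commutes]
  exact sum_mem fun d _ => mul_mem (S.algebraMap_mem _) (mul_mem (pow_mem ha _) (pow_mem hb _))

theorem map_eval3_mem (φ : A →ₐ[k] B) {S : Subalgebra k B} (p : MvPolynomial (Fin 3) k)
    {a b c : A} (ha : φ a ∈ S) (hb : φ b ∈ S) (hc : φ c ∈ S) : φ (eval3 k p a b c) ∈ S := by
  simp only [eval3, map_sum, map_mul, map_pow, AlgHom.commutes]
  exact sum_mem fun d _ => mul_mem (S.algebraMap_mem _)
    (mul_mem (mul_mem (pow_mem ha _) (pow_mem hb _)) (pow_mem hc _))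

end Eval

section ScalarsModulo

variable {k R : Type*} [CommRing k] [Ring R] [Algebra k R] {I : Submodule R R}

theorem mem_restrictScalars_sup_one_iff {a : R} :
    a ∈ I.restrictScalars k ⊔ 1 ↔ ∃ c : k, a - algebraMap k R c ∈ I := by
  rw [Submodule.mem_sup]
  constructor
  · rintro ⟨b, hb, _, hc, rfl⟩
    obtain ⟨c, rfl⟩ := Submodule.mem_one.mp hc
    exact ⟨c, by simpa using hb⟩
  · rintro ⟨c, hc⟩
    exact ⟨_, hc, _, Submodule.mem_one.mpr ⟨c, rfl⟩, sub_add_cancel _ _⟩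

theorem adjoin_le_restrictScalars_sup_one {s : Set R}
    (hs : s ⊆ ((I.restrictScalars k ⊔ 1 : Submodule k R) : Set R)) :
    Subalgebra.toSubmodule (Algebra.adjoin k s) ≤ I.restrictScalars k ⊔ 1 := by
  intro a ha
  rw [Subalgebra.mem_toSubmodule] at ha
  induction ha using Algebra.adjoin_induction with
  | mem a ha => exact hs ha
  | algebraMap c => exact Submodule.mem_sup_right (Submodule.mem_one.mpr ⟨c, rfl⟩)
  | add a b _ _ iha ihb => exact add_mem iha ihb
  | mul a b _ _ iha ihb =>
    obtain ⟨c, hc⟩ := mem_restrictScalars_sup_one_iff.mp iha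
    obtain ⟨d, hd⟩ := mem_restrictScalars_sup_one_iff.mp ihb
    refine mem_restrictScalars_sup_one_iff.mpr ⟨c * d, ?_⟩
    have hsplit : a * b - algebraMap k R (c * d) =
        a * (b - algebraMap k R d) + algebraMap k R d * (a - algebraMap k R c) := by
      rw [mul_sub, mul_sub, ← Algebra.commutes d a, ← map_mul, mul_comm d c, sub_add_sub_cancel]
    rw [hsplit]
    exact add_mem (I.smul_mem a hd) (I.smul_mem _ hc)

end ScalarsModulo

/-- The quiver Hecke algebra on `m` strands, of all weights `β` of height `m` at once. -/
abbrev KLR {k : Type} [Field k] {n : ℕ} (Q : Fin n → Fin n → MvPolynomial (Fin 2) k) (m : ℕ) :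
    Type :=
  RingQuot (Rel k Q (Set.univ : Set (Fin m → Fin n)))

namespace KLR

section Generators

variable {k : Type} [Field k] {n m : ℕ} (Q : Fin n → Fin n → MvPolynomial (Fin 2) k)

/-- The presentation of the quiver Hecke algebra as a quotient of the free algebra. -/
noncomputable abbrev mk : FA k n m →ₐ[k] KLR Q m :=
  RingQuot.mkAlgHom k (Rel k Q (Set.univ : Set (Fin m → Fin n)))

/-- The idempotent `e(ν)` of the quiver Hecke algebra. -/
noncomputable abbrev e (ν : Fin m → Fin n) : KLR Q m := mk Q (Eg k ν)

/-- The polynomial generator `x_p` of the quiver Hecke algebra. -/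
noncomputable abbrev x (p : Fin m) : KLR Q m := mk Q (Xg k p)

/-- The intertwiner `τ_j` of the quiver Hecke algebra. -/
noncomputable abbrev τ (j : ℕ) (h : j + 1 < m) : KLR Q m := mk Q (Tg k j h)

end Generators

variable {k : Type} [Field k] {n : ℕ}

/-- The subalgebra generated by the idempotents `e(ν)` and the polynomial generators `x_p`. -/
noncomputable def polySubalgebra (Q : Fin n → Fin n → MvPolynomial (Fin 2) k) (m : ℕ) :
    Subalgebra k (KLR Q m) :=
  Algebra.adjoin k (Set.range (e Q) ∪ Set.range (x Q))

variable {m : ℕ} {Q : Fin n → Fin n → MvPolynomial (Fin 2) k}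

theorem mk_eq_of_rel {a b : FA k n m} (h : Rel k Q Set.univ a b) : mk Q a = mk Q b :=
  RingQuot.mkAlgHom_rel k h

theorem e_mul_e_self (ν : Fin m → Fin n) : e Q ν * e Q ν = e Q ν := by
  simpa only [map_mul] using mk_eq_of_rel (Rel.e_idem ν)

theorem e_mul_e_of_ne {ν ν' : Fin m → Fin n} (h : ν ≠ ν') : e Q ν * e Q ν' = 0 := by
  simpa only [map_mul, map_zero] using mk_eq_of_rel (Rel.e_orth ν ν' h)

theorem sum_e : ∑ ν : Fin m → Fin n, e Q ν = 1 := by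
  simpa only [map_sum, map_one] using mk_eq_of_rel (Q := Q) Rel.e_sum

theorem x_mul_e (p : Fin m) (ν : Fin m → Fin n) : x Q p * e Q ν = e Q ν * x Q p := by
  simpa only [map_mul] using mk_eq_of_rel (Rel.xe p ν)

theorem τ_mul_e (j : ℕ) (h : j + 1 < m) (ν : Fin m → Fin n) :
    τ Q j h * e Q ν = e Q (swapSeq j h ν) * τ Q j h := by
  simpa only [map_mul] using mk_eq_of_rel (Rel.te j h ν)

theorem τ_comm {i j : ℕ} (hi : i + 1 < m) (hj : j + 1 < m) (hij : i + 1 < j ∨ j + 1 < i) :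
    τ Q i hi * τ Q j hj = τ Q j hj * τ Q i hi := by
  simpa only [map_mul] using mk_eq_of_rel (Rel.tt i hi j hj hij)

theorem e_mem_polySubalgebra (ν : Fin m → Fin n) : e Q ν ∈ polySubalgebra Q m :=
  Algebra.subset_adjoin (Or.inl ⟨ν, rfl⟩)

theorem x_mem_polySubalgebra (p : Fin m) : x Q p ∈ polySubalgebra Q m :=
  Algebra.subset_adjoin (Or.inr ⟨p, rfl⟩)

theorem mem_polySubalgebra_of_mul_e {a : KLR Q m}
    (ha : ∀ ν, a * e Q ν ∈ polySubalgebra Q m) : a ∈ polySubalgebra Q m := by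
  rw [← mul_one a, ← sum_e, Finset.mul_sum]
  exact sum_mem fun ν _ => ha ν

theorem commute_e_of_mem_polySubalgebra (ν : Fin m → Fin n) {p : KLR Q m}
    (hp : p ∈ polySubalgebra Q m) : Commute (e Q ν) p := by
  refine Algebra.commute_of_mem_adjoin_of_forall_mem_commute hp ?_
  rintro _ (⟨ν', rfl⟩ | ⟨p, rfl⟩)
  · rcases eq_or_ne ν ν' with rfl | hne
    · exact Commute.refl _
    · exact (e_mul_e_of_ne hne).trans (e_mul_e_of_ne hne.symm).symm
  · exact (x_mul_e p ν).symm

theorem τ_sq_mem (j : ℕ) (h : j + 1 < m) : τ Q j h * τ Q j h ∈ polySubalgebra Q m := by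
  refine mem_polySubalgebra_of_mul_e fun ν => ?_
  have hrel := mk_eq_of_rel (Q := Q) (Rel.tsq j h ν)
  simp only [map_mul] at hrel
  rw [hrel]
  exact mul_mem (map_eval2_mem _ _ (x_mem_polySubalgebra _) (x_mem_polySubalgebra _))
    (e_mem_polySubalgebra ν)

theorem τ_braid_mem {i j : ℕ} (hi : i + 1 < m) (hj : j + 1 < m) (hij : i + 1 = j ∨ j + 1 = i) :
    τ Q i hi * τ Q j hj * τ Q i hi - τ Q j hj * τ Q i hi * τ Q j hj ∈ polySubalgebra Q m := by
  wlog hlt : j + 1 = i generalizing i j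
  · rw [← neg_sub]
    exact neg_mem (this hj hi hij.symm (hij.resolve_right hlt))
  subst hlt
  refine mem_polySubalgebra_of_mul_e fun ν => ?_
  rw [sub_mul]
  by_cases hν : ν ⟨j, Nat.lt_of_succ_lt hj⟩ = ν ⟨j + 2, hi⟩
  · have hrel := mk_eq_of_rel (Q := Q) (Rel.braid_eq j hj hi ν hν)
    simp only [map_mul, map_add] at hrel
    rw [hrel, add_sub_cancel_left]
    exact mul_mem (map_eval3_mem _ _ (x_mem_polySubalgebra _) (x_mem_polySubalgebra _)
      (x_mem_polySubalgebra _)) (e_mem_polySubalgebra ν)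
  · have hrel := mk_eq_of_rel (Q := Q) (Rel.braid_ne j hj hi ν hν)
    simp only [map_mul] at hrel
    rw [hrel, sub_self]
    exact zero_mem _

theorem τ_mul_x_sub_x_mul_τ_mem (j : ℕ) (h : j + 1 < m) (p : Fin m) :
    τ Q j h * x Q p - x Q (posSwap j h p) * τ Q j h ∈ polySubalgebra Q m := by
  refine mem_polySubalgebra_of_mul_e fun ν => ?_
  rw [sub_mul]
  by_cases hcase : ν ⟨j, Nat.lt_of_succ_lt h⟩ ≠ ν ⟨j + 1, h⟩ ∨ ((p : ℕ) ≠ j ∧ (p : ℕ) ≠ j + 1)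
  · have hrel := mk_eq_of_rel (Q := Q) (Rel.tx_comm j h ν p hcase)
    simp only [map_mul] at hrel
    rw [hrel, sub_self]
    exact zero_mem _
  obtain ⟨hν, hp⟩ := not_or.mp hcase
  obtain rfl | rfl : p = ⟨j, Nat.lt_of_succ_lt h⟩ ∨ p = ⟨j + 1, h⟩ := by
    simp only [Fin.ext_iff]
    omega
  · have hrel := mk_eq_of_rel (Q := Q) (Rel.tx_left j h ν (not_ne_iff.mp hν))
    simp only [map_mul, map_sub] at hrel
    rw [posSwap_apply_left, hrel, sub_sub_cancel_left]
    exact neg_mem (e_mem_polySubalgebra ν)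
  · have hrel := mk_eq_of_rel (Q := Q) (Rel.tx_right j h ν (not_ne_iff.mp hν))
    simp only [map_mul, map_add] at hrel
    rw [posSwap_apply_right, hrel, add_sub_cancel_left]
    exact e_mem_polySubalgebra ν

theorem exists_τ_mul_sub_mul_τ_mem (j : ℕ) (h : j + 1 < m) {p : KLR Q m}
    (hp : p ∈ polySubalgebra Q m) :
    ∃ p' ∈ polySubalgebra Q m, τ Q j h * p - p' * τ Q j h ∈ polySubalgebra Q m := by
  induction hp using Algebra.adjoin_induction with
  | mem p hp =>
    rcases hp with ⟨ν, rfl⟩ | ⟨p, rfl⟩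
    · refine ⟨_, e_mem_polySubalgebra (swapSeq j h ν), ?_⟩
      rw [τ_mul_e, sub_self]
      exact zero_mem _
    · exact ⟨_, x_mem_polySubalgebra (posSwap j h p), τ_mul_x_sub_x_mul_τ_mem j h p⟩
  | algebraMap c =>
    refine ⟨_, Subalgebra.algebraMap_mem _ c, ?_⟩
    rw [Algebra.commutes, sub_self]
    exact zero_mem _
  | add p q _ _ ihp ihq =>
    obtain ⟨p', hp', hp⟩ := ihp
    obtain ⟨q', hq', hq⟩ := ihq
    refine ⟨p' + q', add_mem hp' hq', ?_⟩
    rw [mul_add, add_mul, add_sub_add_comm]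
    exact add_mem hp hq
  | mul p q _ hqmem ihp ihq =>
    obtain ⟨p', hp', hp⟩ := ihp
    obtain ⟨q', hq', hq⟩ := ihq
    refine ⟨p' * q', mul_mem hp' hq', ?_⟩
    have hsplit : τ Q j h * (p * q) - p' * q' * τ Q j h =
        (τ Q j h * p - p' * τ Q j h) * q + p' * (τ Q j h * q - q' * τ Q j h) := by
      rw [sub_mul, mul_sub]
      simp only [mul_assoc, sub_add_sub_cancel]
    rw [hsplit]
    exact add_mem (mul_mem hp hqmem) (mul_mem hp' hq)

theorem isNilHecke : IsNilHecke (polySubalgebra Q m) (τ Q) where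
  comm _ _ := τ_comm
  sq_mem := τ_sq_mem
  braid_mem _ _ := τ_braid_mem
  mul_mem j h _ hp := exists_τ_mul_sub_mul_τ_mem j h hp

theorem adjoin_polySubalgebra_union_τ :
    Algebra.adjoin k ((polySubalgebra Q m : Set (KLR Q m)) ∪
      {t | ∃ (j : ℕ) (h : j + 1 < m), t = τ Q j h}) = ⊤ := by
  have hsurj : Function.Surjective (mk Q : FA k n m →ₐ[k] KLR Q m) :=
    RingQuot.mkAlgHom_surjective k _
  rw [eq_top_iff, ← (AlgHom.range_eq_top _).mpr hsurj, ← Algebra.map_top,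
    ← FreeAlgebra.adjoin_range_ι, AlgHom.map_adjoin]
  refine Algebra.adjoin_mono ?_
  rintro _ ⟨_, ⟨ν | p | ⟨j, h⟩, rfl⟩, rfl⟩
  exacts [Or.inl (e_mem_polySubalgebra ν), Or.inl (x_mem_polySubalgebra p), Or.inr ⟨j, h, rfl⟩]

theorem e_mul_mul_e_mem_short {r : ℕ} {f : Equiv.Perm (Fin m)} {ν ν' : Fin m → Fin n}
    (hne : ν' ≠ ν ∘ f) {u : KLR Q m} (hu : u ∈ lead (polySubalgebra Q m) (τ Q) r f) :
    e Q ν * u * e Q ν' ∈ short (polySubalgebra Q m) (τ Q) (r - 1) := by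
  suffices lead (polySubalgebra Q m) (τ Q) r f ≤ (short (polySubalgebra Q m) (τ Q) (r - 1)).comap
      (LinearMap.mulRight k (e Q ν') ∘ₗ LinearMap.mulLeft k (e Q ν)) from this hu
  clear hu u
  induction r generalizing f ν' with
  | zero => exact bot_le
  | succ r ih =>
    refine sup_le (sup_le (fun u hu => ?_) ?_) (iSup₂_le fun j h => ?_)
    · exact isNilHecke.mul_mem_short_of_mem (mul_mem_short_left (e_mem_polySubalgebra ν) hu)
        (e_mem_polySubalgebra ν')
    · split_ifs with hf
      · intro p hp
        subst hf
        have hzero : e Q ν * p * e Q ν' = 0 := by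
          rw [commute_e_of_mem_polySubalgebra ν hp, mul_assoc, e_mul_e_of_ne (ν := ν) (Ne.symm hne),
            mul_zero]
        simp only [Submodule.mem_comap, LinearMap.comp_apply, LinearMap.mulLeft_apply,
          LinearMap.mulRight_apply, hzero, zero_mem]
      · exact bot_le
    · rintro _ ⟨v, hv, rfl⟩
      have hne' : swapSeq j h ν' ≠ ν ∘ (f * posSwap j h) := by
        intro heq
        refine hne ?_
        rw [← mul_posSwap_cancel_right f j h, Equiv.Perm.coe_mul, ← Function.comp_assoc, ← heq,
          swapSeq, Function.comp_assoc, ← Equiv.Perm.coe_mul, posSwap_mul_self,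
          Equiv.Perm.coe_one, Function.comp_id]
      have hmove : e Q ν * (v * τ Q j h) * e Q ν' = e Q ν * v * e Q (swapSeq j h ν') * τ Q j h := by
        simp only [mul_assoc, τ_mul_e]
      simp only [Submodule.mem_comap, LinearMap.comp_apply, LinearMap.mulLeft_apply,
        LinearMap.mulRight_apply, hmove]
      exact mul_mem_short (ih hne' hv) j h

section Corner

variable {I : Submodule (KLR Q m) (KLR Q m)} {ν₀ : Fin m → Fin n}

theorem one_sub_e_mem (he : ∀ ν, ν ≠ ν₀ → e Q ν ∈ I) : 1 - e Q ν₀ ∈ I := by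
  rw [← sum_e, ← Finset.sum_erase_eq_sub (Finset.mem_univ ν₀)]
  exact sum_mem fun ν hν => he ν (Finset.ne_of_mem_erase hν)

theorem polySubalgebra_le_restrictScalars_sup_one (he : ∀ ν, ν ≠ ν₀ → e Q ν ∈ I)
    (hx : ∀ p, x Q p ∈ I) :
    Subalgebra.toSubmodule (polySubalgebra Q m) ≤ I.restrictScalars k ⊔ 1 := by
  refine adjoin_le_restrictScalars_sup_one ?_
  rintro _ (⟨ν, rfl⟩ | ⟨p, rfl⟩)
  · rcases eq_or_ne ν ν₀ with rfl | hν
    · refine (mem_restrictScalars_sup_one_iff (k := k)).mpr ⟨1, ?_⟩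
      rw [map_one, ← neg_sub]
      exact neg_mem (one_sub_e_mem he)
    · exact Submodule.mem_sup_left (he ν hν)
  · exact Submodule.mem_sup_left (hx p)

theorem short_le_comap_mulLeft_e (he : ∀ ν, ν ≠ ν₀ → e Q ν ∈ I) (hx : ∀ p, x Q p ∈ I)
    (hperm : ∀ f : Equiv.Perm (Fin m), (∀ j h, τ Q j h ∈ I → ¬IsDescent f j h) →
      ν₀ ∘ f = ν₀ → f = 1) (r : ℕ) :
    short (polySubalgebra Q m) (τ Q) r ≤
      (I.restrictScalars k ⊔ 1).comap (LinearMap.mulLeft k (e Q ν₀)) := by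
  induction r with
  | zero => exact bot_le
  | succ r ih =>
    refine (short_le_iSup_lead _).trans (iSup_le fun f u hu => ?_)
    by_cases hdesc : ∃ j h, τ Q j h ∈ I ∧ IsDescent f j h
    · obtain ⟨j, h, hI, hf⟩ := hdesc
      obtain ⟨w, -, hs⟩ := isNilHecke.exists_sub_mul_mem_short (r + 1) hf hu
      rw [← sub_add_cancel u (w * τ Q j h)]
      refine add_mem (ih hs) (Submodule.mem_sup_left ?_)
      exact I.smul_mem (e Q ν₀) (I.smul_mem w hI)
    by_cases hν : ν₀ ∘ f = ν₀
    · obtain rfl := hperm f (fun j h hI hf => hdesc ⟨j, h, hI, hf⟩) hν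
      refine sup_le ih (fun p hp => ?_) (isNilHecke.lead_succ_one_le r hu)
      exact polySubalgebra_le_restrictScalars_sup_one he hx
        ((polySubalgebra Q m).mul_mem (e_mem_polySubalgebra ν₀) hp)
    · have hcorner := ih (e_mul_mul_e_mem_short (Ne.symm hν) hu)
      rw [Submodule.mem_comap, LinearMap.mulLeft_apply, ← mul_assoc, ← mul_assoc,
        e_mul_e_self] at hcorner
      have hrest : e Q ν₀ * u * (1 - e Q ν₀) ∈ I := I.smul_mem _ (one_sub_e_mem he)
      rw [mul_sub, mul_one] at hrest
      rw [Submodule.mem_comap, LinearMap.mulLeft_apply,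
        ← sub_add_cancel (e Q ν₀ * u) (e Q ν₀ * u * e Q ν₀)]
      exact add_mem (Submodule.mem_sup_left hrest) hcorner

theorem exists_e_mul_sub_algebraMap_mem (he : ∀ ν, ν ≠ ν₀ → e Q ν ∈ I) (hx : ∀ p, x Q p ∈ I)
    (hperm : ∀ f : Equiv.Perm (Fin m), (∀ j h, τ Q j h ∈ I → ¬IsDescent f j h) →
      ν₀ ∘ f = ν₀ → f = 1) (a : KLR Q m) :
    ∃ c : k, e Q ν₀ * a - algebraMap k (KLR Q m) c ∈ I := by
  obtain ⟨r, hr⟩ := isNilHecke.exists_mem_short adjoin_polySubalgebra_union_τ a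
  exact mem_restrictScalars_sup_one_iff.mp (short_le_comap_mulLeft_e he hx hperm r hr)

end Corner

end KLR

section Shuffle

theorem eq_one_of_comp_eq_of_not_isDescent {α : Type*} [Zero α] [Preorder α] {m : ℕ}
    {ν : Fin m → α} {f : Equiv.Perm (Fin m)} (hν : ν ∘ f = ν)
    (hdesc : ∀ j (h : j + 1 < m), ν ⟨j, Nat.lt_of_succ_lt h⟩ ≠ 0 → ¬IsDescent f j h)
    (hzero : ∀ (p : Fin m) (q : ℕ) (h : q + 1 < m), (p : ℕ) ≤ q →
      ν ⟨q, Nat.lt_of_succ_lt h⟩ = 0 → ν p < ν ⟨q + 1, h⟩) : f = 1 := by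
  suffices hfix : ∀ p, f p = p from Equiv.ext hfix
  intro p
  induction p using WellFoundedLT.induction with
  | _ p ih =>
    obtain ⟨⟨q, hq⟩, hqp⟩ := f.surjective p
    obtain hlt | rfl | hlt := lt_trichotomy ⟨q, hq⟩ p
    · exact absurd ((ih _ hlt).symm.trans hqp) hlt.ne
    · exact hqp
    obtain ⟨j, rfl⟩ : ∃ j, q = j + 1 := ⟨q - 1, by grind⟩
    have hpj : (p : ℕ) ≤ j := Nat.lt_succ_iff.mp hlt
    have hνp : ν ⟨j + 1, hq⟩ = ν p := by rw [← hqp, ← congrFun hν ⟨j + 1, hq⟩, Function.comp_apply]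
    by_cases hj : ν ⟨j, Nat.lt_of_succ_lt hq⟩ = 0
    · exact absurd hνp.symm (hzero p j hq hpj hj).ne
    · have hfj : f ⟨j, Nat.lt_of_succ_lt hq⟩ < p := by
        refine lt_of_le_of_ne (hqp ▸ not_lt.mp (hdesc j hq hj)) fun heq => ?_
        simpa using f.injective (heq.trans hqp.symm)
      rw [f.injective (ih _ hfj)] at hfj
      exact absurd hfj hpj.not_gt

end Shuffle

/-! ### The head of a cyclic module -/

section CyclicHead

variable {k R V : Type*} [Field k] [Ring R] [Algebra k R] [AddCommGroup V] [Module R V]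
  {I : Submodule R R} {v : V} {e : R}

theorem jacobson_eq_ker {N : Type*} [AddCommGroup N] [Module R N] (Φ : N →ₗ[R] V) {u : N}
    (hu : Submodule.span R {u} = ⊤) (hΦ : Φ u ≠ 0)
    (he : ∀ w, ∃ c : k, e • w = algebraMap k R c • u)
    (hsocle : ∀ w : V, w ≠ 0 → ∃ a : R, (e * a) • w = Φ u) :
    Module.jacobson R N = LinearMap.ker Φ := by
  have hproper : ∀ U : Submodule R N, U ≠ ⊤ → U ≤ LinearMap.ker Φ := by
    intro U hU w hw
    by_contra hΦw
    obtain ⟨a, ha⟩ := hsocle (Φ w) hΦw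
    obtain ⟨c, hc⟩ := he (a • w)
    have hcu : algebraMap k R c • Φ u = Φ u := by
      rw [← map_smul, ← hc, map_smul, map_smul, smul_smul, ha]
    have hc0 : c ≠ 0 := by
      rintro rfl
      exact hΦ (by rw [← hcu, map_zero, zero_smul])
    have huU : u ∈ U := by
      have hmem := U.smul_mem (algebraMap k R c⁻¹) (hc ▸ U.smul_mem e (U.smul_mem a hw))
      rwa [smul_smul, ← map_mul, inv_mul_cancel₀ hc0, map_one, one_smul] at hmem
    exact hU (top_le_iff.mp (hu ▸ (Submodule.span_singleton_le_iff_mem u U).mpr huU))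
  have hcoatom : IsCoatom (LinearMap.ker Φ) := by
    refine ⟨fun htop => hΦ (LinearMap.mem_ker.mp (htop ▸ Submodule.mem_top)), fun U hU => ?_⟩
    by_contra hne
    exact hU.not_ge (hproper U hne)
  exact le_antisymm (sInf_le hcoatom)
    (le_sInf fun U hU => ((hU.le_iff_eq hcoatom.1).mp (hproper U hU.1)).le)

theorem nonempty_head_equiv (hI : ∀ a ∈ I, a • v = 0) (hv : v ≠ 0)
    (hgen : ∀ w : V, ∃ a : R, a • v = w) (he : ∀ a, ∃ c : k, e * a - algebraMap k R c ∈ I)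
    (hsocle : ∀ w : V, w ≠ 0 → ∃ a : R, (e * a) • w = v) :
    Nonempty (((R ⧸ I) ⧸ Module.jacobson R (R ⧸ I)) ≃ₗ[R] V) := by
  let Φ : (R ⧸ I) →ₗ[R] V := I.liftQ (LinearMap.toSpanSingleton R V v) hI
  have hΦ : ∀ a, Φ (I.mkQ a) = a • v := fun a => I.liftQ_apply _ a
  have hΦ1 : Φ (I.mkQ 1) = v := by rw [hΦ, one_smul]
  have hsmul : ∀ a b : R, a • I.mkQ b = I.mkQ (a * b) := fun a b => (map_smul I.mkQ a b).symm
  have hker : Module.jacobson R (R ⧸ I) = LinearMap.ker Φ := by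
    refine jacobson_eq_ker (k := k) (u := I.mkQ 1) (e := e) Φ ?_ (hΦ1 ▸ hv) (fun w => ?_)
      (hΦ1 ▸ hsocle)
    · refine eq_top_iff.mpr fun w _ => ?_
      obtain ⟨a, rfl⟩ := I.mkQ_surjective w
      exact Submodule.mem_span_singleton.mpr ⟨a, by rw [hsmul, mul_one]⟩
    · obtain ⟨a, rfl⟩ := I.mkQ_surjective w
      obtain ⟨c, hc⟩ := he a
      refine ⟨c, ?_⟩
      rw [hsmul, hsmul, mul_one]
      exact (Submodule.Quotient.eq I).mpr hc
  have hsurj : Function.Surjective Φ := fun w => (hgen w).imp' I.mkQ fun a ha => (hΦ a).trans ha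
  exact ⟨(Submodule.quotEquivOfEq _ _ hker).trans (Φ.quotKerEquivOfSurjective hsurj)⟩

end CyclicHead

/-! ### Shifted standard tableaux -/

section Diagram

variable {l : List ℕ} {b : ℕ × ℕ}

theorem mem_diagram_cons {x : ℕ} :
    b ∈ diagram (x :: l) ↔ b.1 = 1 ∧ 1 ≤ b.2 ∧ b.2 ≤ x ∨ ∃ b' ∈ diagram l, b = b' + (1, 1) := by
  obtain ⟨r, c⟩ := b
  simp only [diagram, Set.mem_ofPred_eq, List.length_cons, Prod.exists, Prod.mk_add_mk,
    Prod.mk.injEq]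
  constructor
  · rintro ⟨hr, h1, hrc, hc⟩
    obtain rfl | ⟨i, rfl⟩ : r = 1 ∨ ∃ i, r = i + 1 + 1 :=
      h1.eq_or_lt.imp Eq.symm fun h => ⟨r - 2, by omega⟩
    · rw [Nat.sub_self, List.getD_cons_zero] at hc
      omega
    · rw [Nat.add_sub_cancel, List.getD_cons_succ] at hc
      refine Or.inr ⟨i + 1, c - 1, ?_, rfl, by omega⟩
      rw [Nat.add_sub_cancel]
      omega
  · rintro (⟨rfl, hc1, hcx⟩ | ⟨r, c, ⟨hr, h1, hrc, hc⟩, rfl, rfl⟩)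
    · rw [Nat.sub_self, List.getD_cons_zero]
      omega
    · obtain ⟨i, rfl⟩ : ∃ i, r = i + 1 := ⟨r - 1, by omega⟩
      rw [Nat.add_sub_cancel] at hr hc
      rw [Nat.add_sub_cancel, List.getD_cons_succ]
      omega

theorem getD_add_le_getD_add (hdec : l.IsChain (· > ·)) {i j : ℕ} (hij : i ≤ j)
    (hj : j < l.length) :
    l.getD j 0 + j ≤ l.getD i 0 + i := by
  induction j, hij using Nat.le_induction with
  | base => exact le_rfl
  | succ j _ ih =>
    have hlt := hdec.getElem j hj
    have := ih (Nat.lt_of_succ_lt hj)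
    rw [List.getD_eq_getElem _ _ hj]
    rw [List.getD_eq_getElem _ _ (Nat.lt_of_succ_lt hj)] at this
    omega

theorem mem_diagram_of_fst_le (hdec : l.IsChain (· > ·)) {r : ℕ} (hb : b ∈ diagram l) (hr : 1 ≤ r)
    (hrb : r ≤ b.1) : (r, b.2) ∈ diagram l := by
  obtain ⟨hlen, h1, hb12, hb2⟩ := hb
  have := getD_add_le_getD_add hdec (show r - 1 ≤ b.1 - 1 by omega) hlen
  exact ⟨show r - 1 < _ by omega, hr, show r ≤ b.2 by omega,
    show b.2 + 1 ≤ l.getD (r - 1) 0 + r by omega⟩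

end Diagram

namespace IsSYT

variable {l : List ℕ} {N : ℕ} {f g : Fin N → ℕ × ℕ}

theorem mem_diagram (hf : IsSYT l N f) (a : Fin N) : f a ∈ diagram l :=
  hf.2.1 ▸ Set.mem_range_self a

theorem exists_eq (hf : IsSYT l N f) {b : ℕ × ℕ} (hb : b ∈ diagram l) : ∃ a, f a = b := by
  rwa [← hf.2.1] at hb

theorem of_strictMono (hf : StrictMono (toLex ∘ f)) (hrange : Set.range f = diagram l) :
    IsSYT l N f := by
  refine ⟨fun a b hab => hf.injective (congrArg toLex hab), hrange, fun a b h1 h2 => ?_,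
    fun a b _ h1 => ?_⟩
  · exact hf.lt_iff_lt.mp (Prod.Lex.toLex_lt_toLex.mpr (Or.inr ⟨h1, h2⟩))
  · exact hf.lt_iff_lt.mp (Prod.Lex.toLex_lt_toLex.mpr (Or.inl h1))

theorem eq_of_strictMono (hf : IsSYT l N f) (hg : IsSYT l N g) (hf' : StrictMono (toLex ∘ f))
    (hg' : StrictMono (toLex ∘ g)) : f = g := by
  have hrange : Set.range (toLex ∘ f) = Set.range (toLex ∘ g) := by
    rw [Set.range_comp, Set.range_comp, hf.2.1, hg.2.1]
  exact (toLex.injective.comp_left) ((hf'.range_inj hg').mp hrange)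

theorem comp_swap_of_toLex_lt (hf : IsSYT l N f) {a b : Fin N} (hab : (a : ℕ) + 1 = b)
    (hlt : toLex (f b) < toLex (f a)) : IsSYT l N (f ∘ Equiv.swap a b) := by
  have hmono : ∀ c d, Equiv.swap a b c < Equiv.swap a b d →
      toLex (f (Equiv.swap a b c)) < toLex (f (Equiv.swap a b d)) → c < d := by
    intro c d hcd hlex
    by_contra! hdc
    rw [Equiv.swap_apply_def, Equiv.swap_apply_def] at hcd hlex
    split_ifs at hcd hlex <;> grind [lt_asymm]
  refine ⟨hf.1.comp (Equiv.injective _), ?_, fun c d h1 h2 => ?_, fun c d h2 h1 => ?_⟩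
  · rw [(Equiv.surjective _).range_comp, hf.2.1]
  · exact hmono c d (hf.2.2.1 _ _ h1 h2) (Prod.Lex.toLex_lt_toLex.mpr (Or.inr ⟨h1, h2⟩))
  · exact hmono c d (hf.2.2.2 _ _ h2 h1) (Prod.Lex.toLex_lt_toLex.mpr (Or.inl h1))

theorem not_comp_swap_of_fst_eq (hf : IsSYT l N f) {a b : Fin N} (hne : a ≠ b)
    (hfst : (f a).1 = (f b).1) : ¬IsSYT l N (f ∘ Equiv.swap a b) := by
  wlog hlt : (f a).2 < (f b).2 generalizing a b
  · rw [Equiv.swap_comm]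
    exact this hne.symm hfst.symm (lt_of_le_of_ne (not_lt.mp hlt) fun hsnd =>
      hne (hf.1 (Prod.ext hfst hsnd.symm)))
  intro hswap
  refine lt_asymm (hf.2.2.1 a b hfst hlt) (hswap.2.2.1 b a ?_ ?_) <;>
    simpa only [Function.comp_apply, Equiv.swap_apply_left, Equiv.swap_apply_right]

theorem le_of_le (hdec : l.IsChain (· > ·)) (hf : IsSYT l N f) {a b : Fin N} (hab : f a ≤ f b) :
    a ≤ b := by
  obtain ⟨c, hc⟩ := hf.exists_eq
    (mem_diagram_of_fst_le hdec (hf.mem_diagram b) (hf.mem_diagram a).2.1 hab.1)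
  have hac : a ≤ c := by
    rcases hab.2.eq_or_lt with heq | hlt
    · exact (hf.1 (hc.trans (Prod.ext rfl heq.symm))).ge
    · exact (hf.2.2.1 a c (by rw [hc]) (by rwa [hc])).le
  have hcb : c ≤ b := by
    rcases hab.1.eq_or_lt with heq | hlt
    · exact (hf.1 (hc.trans (Prod.ext heq rfl))).le
    · exact (hf.2.2.2 c b (by rw [hc]) (by rwa [hc])).le
  exact hac.trans hcb

theorem content_lt_of_strictMono (hdec : l.IsChain (· > ·)) (hf : IsSYT l N f)
    (hmono : StrictMono (toLex ∘ f)) {a b c : Fin N} (hab : (a : ℕ) + 1 = b) (hbc : b ≤ c)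
    (hdiag : (f b).2 = (f b).1) : (f c).2 - (f c).1 < (f a).2 - (f a).1 := by
  obtain ⟨ha0, ha1, ha2, ha3⟩ := hf.mem_diagram a
  obtain ⟨hc0, hc1, hc2, hc3⟩ := hf.mem_diagram c
  have hfbc : (f b).1 ≤ (f c).1 := Prod.Lex.monotone_fst _ _ (hmono.monotone hbc)
  have hfab : (f a).1 < (f b).1 := by
    rcases Prod.Lex.toLex_lt_toLex.mp (hmono (Fin.lt_def.mpr (by omega : (a : ℕ) < b)))
      with hlt | ⟨heq, hlt⟩ <;> omega
  by_contra! hcontent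
  have hrow := getD_add_le_getD_add hdec (show (f a).1 - 1 ≤ (f c).1 - 1 by omega) hc0
  -- Otherwise the box to the right of `f a` would come strictly between `f a` and `f b`.
  obtain ⟨d, hd⟩ : ∃ d, f d = ((f a).1, (f a).2 + 1) := by
    refine hf.exists_eq ⟨ha0, ha1, ha2.trans (Nat.le_succ _), ?_⟩
    change (f a).2 + 1 + 1 ≤ l.getD ((f a).1 - 1) 0 + (f a).1
    omega
  have had : a < d := hmono.lt_iff_lt.mp
    (Prod.Lex.toLex_lt_toLex.mpr (Or.inr (hd ▸ ⟨rfl, Nat.lt_succ_self _⟩)))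
  have hdb : d < b := hmono.lt_iff_lt.mp (Prod.Lex.toLex_lt_toLex.mpr (Or.inl (hd ▸ hfab)))
  omega

end IsSYT

theorem val_resFin {n : ℕ} (hn : 0 < n) {l : List ℕ} (hle : ∀ x ∈ l, x ≤ n) {b : ℕ × ℕ}
    (hb : b ∈ diagram l) : (resFin n hn b : ℕ) = b.2 - b.1 := by
  obtain ⟨hlen, -, -, hb2⟩ := hb
  have := hle _ (List.getElem_mem hlen)
  rw [List.getD_eq_getElem _ _ hlen] at hb2
  simp only [resFin]
  omega

theorem IsSYT.eq_of_resSeq_eq {l : List ℕ} {N n : ℕ} {f g : Fin N → ℕ × ℕ}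
    (hdec : l.IsChain (· > ·)) (hn : 0 < n) (hle : ∀ x ∈ l, x ≤ n) (hf : IsSYT l N f)
    (hg : IsSYT l N g) (hres : resSeq n hn f = resSeq n hn g) : f = g := by
  suffices hpre : ∀ a, f a = g a from funext hpre
  intro a
  induction a using WellFoundedLT.induction with
  | _ a ih =>
    have hcontent : (f a).2 - (f a).1 = (g a).2 - (g a).1 := by
      rw [← val_resFin hn hle (hf.mem_diagram a), ← val_resFin hn hle (hg.mem_diagram a)]
      simpa [resSeq] using congrArg Fin.val (congrFun hres a.rev)
    wlog hfst : (f a).1 ≤ (g a).1 generalizing f g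
    · exact (this hg hf hres.symm (fun b hb => (ih b hb).symm) hcontent.symm
        (not_le.mp hfst).le).symm
    have hf12 := (hf.mem_diagram a).2.2.1
    have hg12 := (hg.mem_diagram a).2.2.1
    obtain ⟨b, hb⟩ := hg.exists_eq (hf.mem_diagram a)
    have hba : b ≤ a := hg.le_of_le hdec (hb ▸ ⟨hfst, by omega⟩)
    rcases hba.eq_or_lt with rfl | hlt
    · exact hb.symm
    · exact absurd (hf.1 ((ih b hlt).trans hb)) hlt.ne

theorem IsSYT.resSeq_injective {l : List ℕ} {N n : ℕ} (hdec : l.IsChain (· > ·)) (hn : 0 < n)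
    (hle : ∀ x ∈ l, x ≤ n) :
    Function.Injective fun T : {f : Fin N → ℕ × ℕ // IsSYT l N f} => resSeq n hn T.1 :=
  fun S T h => Subtype.ext (S.2.eq_of_resSeq_eq hdec hn hle T.2 h)

section RowReading

/-- The boxes of the shifted diagram of `l`, listed from `0` along the rows, top row first.
Positions from `l.sum` on carry a junk value. -/
def rowReading : List ℕ → ℕ → ℕ × ℕ
  | [], _ => (1, 1)
  | x :: l, p => if p < x then (1, p + 1) else rowReading l (p - x) + (1, 1)

variable {l : List ℕ}

theorem rowReading_cons_of_lt {x p : ℕ} (h : p < x) : rowReading (x :: l) p = (1, p + 1) :=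
  if_pos h

theorem rowReading_cons_add (x p : ℕ) :
    rowReading (x :: l) (x + p) = rowReading l p + (1, 1) := by
  rw [rowReading, if_neg (Nat.le_add_right x p).not_gt, Nat.add_sub_cancel_left]

theorem image_rowReading : rowReading l '' Set.Iio l.sum = diagram l := by
  induction l with
  | nil => simp [diagram]
  | cons x l ih =>
    ext b
    rw [mem_diagram_cons, ← ih, List.sum_cons]
    constructor
    · rintro ⟨p, hp, rfl⟩
      rcases lt_or_ge p x with hpx | hxp
      · rw [rowReading_cons_of_lt hpx]
        exact Or.inl ⟨rfl, Nat.le_add_left 1 p, hpx⟩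
      · obtain ⟨q, rfl⟩ := Nat.exists_eq_add_of_le hxp
        exact Or.inr ⟨_, ⟨q, Nat.lt_of_add_lt_add_left hp, rfl⟩, rowReading_cons_add x q⟩
    · rintro (⟨h1, hb1, hbx⟩ | ⟨_, ⟨q, hq, rfl⟩, rfl⟩)
      · refine ⟨b.2 - 1, Set.mem_Iio.mpr (by omega), ?_⟩
        rw [rowReading_cons_of_lt (by omega), Nat.sub_add_cancel hb1, ← h1]
      · exact ⟨x + q, Nat.add_lt_add_left hq x, rowReading_cons_add x q⟩

theorem one_le_rowReading_fst (l : List ℕ) (p : ℕ) : 1 ≤ (rowReading l p).1 := by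
  fun_induction rowReading <;> simp

theorem strictMonoOn_rowReading :
    StrictMonoOn (fun p => toLex (rowReading l p)) (Set.Iio l.sum) := by
  induction l with
  | nil => simp [StrictMonoOn]
  | cons x l ih =>
    intro p hp q hq hpq
    rw [Set.mem_Iio, List.sum_cons] at hp hq
    rw [Prod.Lex.toLex_lt_toLex]
    rcases lt_or_ge q x with hqx | hxq
    · rw [rowReading_cons_of_lt hqx, rowReading_cons_of_lt (hpq.trans hqx)]
      exact Or.inr ⟨rfl, Nat.succ_lt_succ hpq⟩
    obtain ⟨q, rfl⟩ := Nat.exists_eq_add_of_le hxq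
    rw [rowReading_cons_add]
    rcases lt_or_ge p x with hpx | hxp
    · rw [rowReading_cons_of_lt hpx]
      exact Or.inl (Nat.lt_succ_of_le (one_le_rowReading_fst l q))
    · obtain ⟨p, rfl⟩ := Nat.exists_eq_add_of_le hxp
      have hlex := Prod.Lex.toLex_lt_toLex.mp
        (ih (Nat.lt_of_add_lt_add_left hp) (Nat.lt_of_add_lt_add_left hq)
          (Nat.lt_of_add_lt_add_left hpq))
      rw [rowReading_cons_add]
      exact hlex.imp Nat.succ_lt_succ (And.imp (congrArg Nat.succ) Nat.succ_lt_succ)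

theorem rowReading_sum_take_add {i c : ℕ} (hc : c < l.getD i 0) :
    rowReading l ((l.take i).sum + c) = (i + 1, i + 1 + c) := by
  induction l generalizing i with
  | nil => simp at hc
  | cons x l ih =>
    cases i with
    | zero =>
      rw [List.getD_cons_zero] at hc
      rw [List.take_zero, List.sum_nil, Nat.zero_add, rowReading_cons_of_lt hc]
      exact Prod.ext rfl (by omega)
    | succ i =>
      rw [List.take_succ_cons, List.sum_cons, Nat.add_assoc, rowReading_cons_add, ih hc]
      exact Prod.ext rfl (by simp; omega)

theorem strictMono_rowReading_fin : StrictMono (toLex ∘ fun p : Fin l.sum => rowReading l p) :=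
  fun p q hpq => strictMonoOn_rowReading p.2 q.2 hpq

theorem isSYT_rowReading : IsSYT l l.sum (fun p => rowReading l p) := by
  refine IsSYT.of_strictMono strictMono_rowReading_fin ?_
  rw [← image_rowReading, ← Fin.range_val, ← Set.range_comp]
  rfl

end RowReading

section SwapAdj

variable {l : List ℕ} {N : ℕ}

theorem exists_succ_lt_of_not_strictMono {α : Type*} [LinearOrder α] {F : Fin N → α}
    (hinj : Function.Injective F) (hF : ¬StrictMono F) :
    ∃ a b : Fin N, (a : ℕ) + 1 = b ∧ F b < F a := by
  rcases N with _ | N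
  · exact absurd (Subsingleton.strictMono F) hF
  rw [Fin.strictMono_iff_lt_succ, not_forall] at hF
  obtain ⟨i, hi⟩ := hF
  exact ⟨i.castSucc, i.succ, rfl,
    lt_of_le_of_ne (not_lt.mp hi) (hinj.ne (Fin.castSucc_lt_succ (i := i)).ne')⟩

theorem swapEnt_swapEnt (j : ℕ) (h : j + 1 < N) (f : Fin N → ℕ × ℕ) :
    swapEnt j h (swapEnt j h f) = f := by
  rw [swapEnt, swapEnt, Function.comp_assoc, ← Equiv.coe_trans, Equiv.swap_swap,
    Equiv.coe_refl, Function.comp_id]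

/-- Adjacency of standard tableaux: `T` arises from `S` by exchanging two consecutive entries. -/
def SwapAdj (S T : {f : Fin N → ℕ × ℕ // IsSYT l N f}) : Prop :=
  ∃ j h, swapEnt j h S.1 = T.1

instance : Std.Symm (SwapAdj (l := l) (N := N)) where
  symm := by
    rintro S T ⟨j, h, hST⟩
    exact ⟨j, h, hST ▸ swapEnt_swapEnt j h S.1⟩

theorem swapEnt_rev {a b : Fin N} (hab : (a : ℕ) + 1 = b) (h : (b.rev : ℕ) + 1 < N)
    (f : Fin N → ℕ × ℕ) : swapEnt (b.rev : ℕ) h f = f ∘ Equiv.swap a b := by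
  have ha : Fin.rev ⟨(b.rev : ℕ) + 1, h⟩ = a := by grind
  rw [swapEnt, ha, Fin.eta, Fin.rev_rev, Equiv.swap_comm]

theorem reflTransGen_swapAdj_of_strictMono {S : {f : Fin N → ℕ × ℕ // IsSYT l N f}}
    (hS : StrictMono (toLex ∘ S.1)) (T : {f : Fin N → ℕ × ℕ // IsSYT l N f}) :
    Relation.ReflTransGen SwapAdj S T := by
  induction hT : toLex (toLex ∘ T.1) using WellFoundedLT.induction generalizing T with
  | _ t ih =>
    by_cases hmono : StrictMono (toLex ∘ T.1)
    · rw [Subtype.ext (S.2.eq_of_strictMono T.2 hS hmono)]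
    obtain ⟨a, b, hab, hlt⟩ :=
      exists_succ_lt_of_not_strictMono (toLex.injective.comp T.2.1) hmono
    let T' : {f : Fin N → ℕ × ℕ // IsSYT l N f} := ⟨_, T.2.comp_swap_of_toLex_lt hab hlt⟩
    have hT' : toLex (toLex ∘ T'.1) < t := by
      rw [← hT]
      exact Pi.lex_desc (f := toLex ∘ T.1) (Fin.le_def.mpr (by omega)) hlt
    have hadj : SwapAdj T T' := ⟨b.rev, by grind, swapEnt_rev hab _ T.1⟩
    exact (ih _ hT' T' rfl).tail (symm hadj)

end SwapAdj

section Blocks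

variable {l : List ℕ}

/-- The tableau filled row by row: the image in `Sp(b)` of the generator of the convolution
product. -/
def rowTableau (l : List ℕ) : {f : Fin l.sum → ℕ × ℕ // IsSYT l l.sum f} :=
  ⟨fun p => rowReading l p, isSYT_rowReading⟩

theorem exists_eq_sum_take_add {p : ℕ} (hp : p < l.sum) :
    ∃ i q, q < l.getD i 0 ∧ p = (l.take i).sum + q := by
  induction l generalizing p with
  | nil => simp at hp
  | cons x l ih =>
    rcases lt_or_ge p x with hpx | hxp
    · exact ⟨0, p, by simpa using hpx, by simp⟩
    · obtain ⟨p, rfl⟩ := Nat.exists_eq_add_of_le hxp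
      rw [List.sum_cons, Nat.add_lt_add_iff_left] at hp
      obtain ⟨i, q, hq, rfl⟩ := ih hp
      exact ⟨i + 1, q, by simpa using hq, by simp [Nat.add_assoc]⟩

theorem exists_eq_blockStart_add {p : ℕ} (hp : p < l.sum) :
    ∃ t q, q < blockSize l t ∧ p = blockStart l t + q :=
  exists_eq_sum_take_add (l := l.reverse) (by rwa [List.sum_reverse])

theorem lt_length_of_lt_blockSize {t q : ℕ} (hq : q < blockSize l t) : t < l.length := by
  by_contra! h
  rw [blockSize, List.getD_eq_default _ _ (by rwa [List.length_reverse])] at hq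
  exact Nat.not_lt_zero q hq

theorem blockStart_add_blockSize_add_sum_take {t : ℕ} (ht : t < l.length) :
    blockStart l t + blockSize l t + (l.take (l.length - 1 - t)).sum = l.sum := by
  have hsucc : blockStart l t + blockSize l t = blockStart l (t + 1) := by
    rw [blockStart, blockSize, List.getD_eq_getElem _ _ (by rwa [List.length_reverse]),
      ← List.sum_take_succ]
    rfl
  rw [hsucc, blockStart, List.take_reverse, List.sum_reverse, Nat.add_comm, Nat.sub_sub,
    Nat.add_comm 1, List.sum_take_add_sum_drop]

theorem rowTableau_rev_blockStart_add {t q : ℕ} (hq : q < blockSize l t)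
    (h : blockStart l t + q < l.sum) :
    (rowTableau l).1 (Fin.rev ⟨blockStart l t + q, h⟩) =
      (l.length - t, l.length - t + (blockSize l t - 1 - q)) := by
  have ht := lt_length_of_lt_blockSize hq
  have hsum := blockStart_add_blockSize_add_sum_take ht
  have hc : blockSize l t - 1 - q < l.getD (l.length - 1 - t) 0 := by
    rw [← List.getD_reverse t ht, ← blockSize]
    omega
  have hpos : l.sum - (blockStart l t + q + 1) =
      (l.take (l.length - 1 - t)).sum + (blockSize l t - 1 - q) := by omega
  have hrow : l.length - 1 - t + 1 = l.length - t := by omega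
  simp only [rowTableau, Fin.val_rev, hpos, rowReading_sum_take_add hc, hrow]

variable {n : ℕ} (hn : 0 < n)

theorem resSeq_rowTableau_blockStart_add {t : ℕ} (q : Fin (blockSize l t))
    (h : blockStart l t + q < l.sum) :
    resSeq n hn (rowTableau l).1 ⟨blockStart l t + q, h⟩ = localRes n hn l t q := by
  rw [resSeq, rowTableau_rev_blockStart_add q.2, localRes, resFin, resFin, Fin.mk.injEq]
  omega

theorem sameBlock_of_resSeq_rowTableau_ne_zero {j : ℕ} (h : j < l.sum)
    (hres : (resSeq n hn (rowTableau l).1 ⟨j, h⟩ : ℕ) ≠ 0) : sameBlock l j := by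
  obtain ⟨t, q, hq, rfl⟩ := exists_eq_blockStart_add h
  have hlocal := resSeq_rowTableau_blockStart_add hn ⟨q, hq⟩ h
  rw [hlocal, localRes] at hres
  simp only [resFin] at hres
  exact ⟨t, Nat.le_add_right _ _, by omega⟩

theorem not_isSYT_swapEnt_rowTableau {j : ℕ} (hj : sameBlock l j) (h : j + 1 < l.sum) :
    ¬IsSYT l l.sum (swapEnt j h (rowTableau l).1) := by
  obtain ⟨t, hstart, hend⟩ := hj
  obtain ⟨q, rfl⟩ := Nat.exists_eq_add_of_le hstart
  refine (rowTableau l).2.not_comp_swap_of_fst_eq (by simp) ?_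
  rw [rowTableau_rev_blockStart_add (by omega)]
  simp only [Nat.add_assoc]
  rw [rowTableau_rev_blockStart_add (by omega)]

theorem resSeq_rowTableau_lt_succ (hdec : l.IsChain (· > ·)) (hle : ∀ x ∈ l, x ≤ n) (p : Fin l.sum)
    {q : ℕ} (h : q + 1 < l.sum) (hpq : (p : ℕ) ≤ q)
    (hq : (resSeq n hn (rowTableau l).1 ⟨q, Nat.lt_of_succ_lt h⟩ : ℕ) = 0) :
    (resSeq n hn (rowTableau l).1 p : ℕ) < resSeq n hn (rowTableau l).1 ⟨q + 1, h⟩ := by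
  have hT := (rowTableau l).2
  rw [resSeq, val_resFin hn hle (hT.mem_diagram _)] at hq
  rw [resSeq, resSeq, val_resFin hn hle (hT.mem_diagram _), val_resFin hn hle (hT.mem_diagram _)]
  refine hT.content_lt_of_strictMono hdec strictMono_rowReading_fin ?_ (Fin.rev_le_rev.mpr hpq)
    ((Nat.sub_eq_zero_iff_le.mp hq).antisymm (hT.mem_diagram _).2.2.1)
  grind

end Blocks

/-! ### The module spanned by tableaux -/

section TabV

variable {k : Type} [Field k] {N n : ℕ} {hn : 0 < n} {P : (Fin N → ℕ × ℕ) → Prop}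

theorem eOpTab_single (μ : Fin N → Fin n) (T : {f // P f}) :
    eOpTab k n hn P μ (Pi.single T 1) = if resSeq n hn T.1 = μ then Pi.single T 1 else 0 := by
  ext S
  rcases eq_or_ne S T with rfl | hST
  · simp only [eOpTab, LinearMap.pi_apply]
    split_ifs <;> rfl
  · simp only [eOpTab, LinearMap.pi_apply]
    split_ifs <;> simp [hST]

theorem eOpTab_resSeq (hinj : Function.Injective fun T : {f // P f} => resSeq n hn T.1)
    (T : {f // P f}) (w : TabV k P) :
    eOpTab k n hn P (resSeq n hn T.1) w = w T • Pi.single T 1 := by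
  ext S
  rcases eq_or_ne S T with rfl | hST
  · simp [eOpTab]
  · simp [eOpTab, hST, hinj.ne hST]

theorem tOpTab_apply (j : ℕ) (h : j + 1 < N) (w : TabV k P) (T : {f // P f}) :
    tOpTab k P j h w T = if hT : P (swapEnt j h T.1) then w ⟨swapEnt j h T.1, hT⟩ else 0 := by
  simp only [tOpTab, LinearMap.pi_apply]
  split_ifs <;> rfl

theorem tOpTab_single_of_swapEnt_eq {j : ℕ} {h : j + 1 < N} {S T : {f // P f}}
    (hST : swapEnt j h S.1 = T.1) : tOpTab k P j h (Pi.single S 1) = Pi.single T 1 := by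
  have hTS : swapEnt j h T.1 = S.1 := by rw [← hST, swapEnt_swapEnt]
  ext U
  rw [tOpTab_apply]
  rcases eq_or_ne U T with rfl | hUT
  · simp [hTS, S.2]
  · rw [Pi.single_eq_of_ne hUT]
    refine dite_eq_right_iff.mpr fun hU => Pi.single_eq_of_ne (fun heq => hUT ?_) _
    exact Subtype.ext (by rw [← hST, ← heq, swapEnt_swapEnt])

theorem tOpTab_single_eq_zero {j : ℕ} {h : j + 1 < N} {S : {f // P f}}
    (hS : ¬P (swapEnt j h S.1)) : tOpTab k P j h (Pi.single S 1) = 0 := by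
  ext U
  rw [tOpTab_apply]
  refine dite_eq_right_iff.mpr fun hU => Pi.single_eq_of_ne (fun heq => hS ?_) _
  rw [← heq, swapEnt_swapEnt]
  exact U.2

end TabV

/-! ### The convolution product -/

section ConvIdeal

open KLR

variable {k : Type} [Field k] {n : ℕ} {hn : 0 < n} {Q : Fin n → Fin n → MvPolynomial (Fin 2) k}
  {l : List ℕ}

theorem blockMatch_resSeq_rowTableau_iff {t : ℕ} {μ : Fin (blockSize l t) → Fin n} :
    BlockMatch n l t μ (resSeq n hn (rowTableau l).1) ↔ ∀ q, μ q = localRes n hn l t q := by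
  refine forall_congr' fun q => ?_
  have hsum := blockStart_add_blockSize_add_sum_take (lt_length_of_lt_blockSize q.2)
  have hlt : blockStart l t + q < l.sum := by omega
  rw [forall_prop_of_true hlt, resSeq_rowTableau_blockStart_add, eq_comm]

theorem imgE_eq_sum (t : ℕ) (μ : Fin (blockSize l t) → Fin n) :
    imgE k n Q l t μ = ∑ ν with BlockMatch n l t μ ν, e Q ν :=
  map_sum _ _ _

theorem smul_eq_zero_of_mem_convIdeal {V : Type*} [AddCommGroup V] [Module (KLR Q l.sum) V] {v : V}
    (he : e Q (resSeq n hn (rowTableau l).1) • v = v) (hx : ∀ p : Fin l.sum, x Q p • v = 0)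
    (hτ : ∀ (j : ℕ) (h : j + 1 < l.sum), sameBlock l j → τ Q j h • v = 0) {a : KLR Q l.sum}
    (ha : a ∈ convIdeal k n hn Q l) : a • v = 0 := by
  have heν : ∀ ν, e Q ν • v = if ν = resSeq n hn (rowTableau l).1 then v else 0 := by
    intro ν
    split_ifs with hν
    · rwa [hν]
    · rw [← he, smul_smul, e_mul_e_of_ne hν, zero_smul]
  suffices convIdeal k n hn Q l ≤ LinearMap.ker (LinearMap.toSpanSingleton _ V v) from this ha
  refine Submodule.span_le.mpr ?_
  rintro _ ((⟨t, -, μ, rfl⟩ | ⟨p, rfl⟩) | ⟨j, h, hj, rfl⟩)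
  · rw [SetLike.mem_coe, LinearMap.mem_ker, LinearMap.toSpanSingleton_apply, imgE_eq_sum, sub_smul,
      Finset.sum_smul, sub_eq_zero]
    simp only [heν, Finset.sum_ite_eq', Finset.mem_filter_univ, blockMatch_resSeq_rowTableau_iff,
      ite_smul, one_smul, zero_smul]
  · exact hx p
  · exact hτ j h hj

theorem e_mem_convIdeal {ν : Fin l.sum → Fin n} (hν : ν ≠ resSeq n hn (rowTableau l).1) :
    e Q ν ∈ convIdeal k n hn Q l := by
  obtain ⟨⟨p, hp⟩, hne⟩ := Function.ne_iff.mp hν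
  obtain ⟨t, q, hq, rfl⟩ := exists_eq_blockStart_add hp
  have hsum := blockStart_add_blockSize_add_sum_take (lt_length_of_lt_blockSize hq)
  let μ : Fin (blockSize l t) → Fin n := fun q => ν ⟨blockStart l t + q, by omega⟩
  have hμ : ¬∀ q, μ q = localRes n hn l t q := fun hμ =>
    hne ((hμ ⟨q, hq⟩).trans (resSeq_rowTableau_blockStart_add hn ⟨q, hq⟩ hp).symm)
  have hgen : imgE k n Q l t μ ∈ convIdeal k n hn Q l :=
    Submodule.subset_span (Or.inl (Or.inl
      ⟨t, lt_length_of_lt_blockSize hq, μ, by rw [if_neg hμ, sub_zero]⟩))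
  have hmul : e Q ν * imgE k n Q l t μ = e Q ν := by
    have hmatch : ν ∈ Finset.univ.filter (BlockMatch n l t μ) :=
      Finset.mem_filter_univ ν |>.mpr fun _ _ => rfl
    rw [imgE_eq_sum, Finset.mul_sum, Finset.sum_eq_single_of_mem ν hmatch fun ν' _ hne' =>
      e_mul_e_of_ne hne'.symm, e_mul_e_self]
  exact hmul ▸ Submodule.smul_mem _ (e Q ν) hgen

theorem exists_e_mul_sub_algebraMap_mem_convIdeal (hdec : l.IsChain (· > ·))
    (hle : ∀ x ∈ l, x ≤ n) (a : KLR Q l.sum) :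
    ∃ c : k, e Q (resSeq n hn (rowTableau l).1) * a - algebraMap k (KLR Q l.sum) c ∈
      convIdeal k n hn Q l := by
  refine exists_e_mul_sub_algebraMap_mem (fun _ => e_mem_convIdeal)
    (fun p => Submodule.subset_span (Or.inl (Or.inr ⟨p, rfl⟩))) (fun f hf hν => ?_) a
  refine eq_one_of_comp_eq_of_not_isDescent
    (ν := fun p => (resSeq n hn (rowTableau l).1 p : ℕ))
    (funext fun p => congrArg Fin.val (congrFun hν p)) (fun j h hne => ?_)
    fun p q h => resSeq_rowTableau_lt_succ hn hdec hle p h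
  refine hf j h (Submodule.subset_span (Or.inr ⟨j, h, ?_, rfl⟩))
  exact sameBlock_of_resSeq_rowTableau_ne_zero hn _ hne

end ConvIdeal

section Action

open KLR

variable {k : Type} [Field k] {n : ℕ} {hn : 0 < n} {Q : Fin n → Fin n → MvPolynomial (Fin 2) k}
  {l : List ℕ} {N : ℕ} {ρ : KLR Q N →ₐ[k] Module.End k (TabV k (IsSYT l N))}

theorem exists_apply_single_eq (hρt : ∀ j h, ρ (τ Q j h) = tOpTab k (IsSYT l N) j h)
    {S T : {f // IsSYT l N f}} (hST : Relation.ReflTransGen SwapAdj S T) :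
    ∃ a, ρ a (Pi.single S 1) = Pi.single T 1 := by
  induction hST with
  | refl => exact ⟨1, by rw [map_one, Module.End.one_apply]⟩
  | tail _ hadj ih =>
    obtain ⟨a, ha⟩ := ih
    obtain ⟨j, h, hswap⟩ := hadj
    refine ⟨τ Q j h * a, ?_⟩
    rw [map_mul, Module.End.mul_apply, ha, hρt, tOpTab_single_of_swapEnt_eq hswap]

theorem exists_apply_eq_of_forall_single {R ι : Type*} [Ring R] [Algebra k R] [Finite ι]
    [DecidableEq ι]
    {ρ : R →ₐ[k] Module.End k (ι → k)} {i : ι}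
    (hi : ∀ j, ∃ a, ρ a (Pi.single i 1) = Pi.single j 1) (w : ι → k) :
    ∃ a, ρ a (Pi.single i 1) = w := by
  have := Fintype.ofFinite ι
  choose a ha using hi
  refine ⟨∑ j, w j • a j, ?_⟩
  simp only [map_sum, map_smul, LinearMap.sum_apply, LinearMap.smul_apply, ha]
  exact (pi_eq_sum_univ' w).symm

theorem exists_apply_eq_single_of_ne_zero (hdec : l.IsChain (· > ·)) (hle : ∀ x ∈ l, x ≤ n)
    (hρe : ∀ μ, ρ (e Q μ) = eOpTab k n hn (IsSYT l N) μ) {S : {f // IsSYT l N f}}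
    (hS : ∀ T, ∃ a, ρ a (Pi.single T 1) = Pi.single S 1) {w : TabV k (IsSYT l N)} (hw : w ≠ 0) :
    ∃ a, ρ a w = Pi.single S 1 := by
  obtain ⟨T, hT⟩ := Function.ne_iff.mp hw
  obtain ⟨a, ha⟩ := hS T
  refine ⟨(w T)⁻¹ • (a * e Q (resSeq n hn T.1)), ?_⟩
  rw [map_smul, LinearMap.smul_apply, map_mul, Module.End.mul_apply, hρe,
    eOpTab_resSeq (IsSYT.resSeq_injective hdec hn hle), map_smul, ha, inv_smul_smul₀ hT]

end Action

theorem sp_is_head_of_convolution_B_general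
    (k : Type) [Field k] (n : ℕ) (hn : 0 < n)
    (Q : Fin n → Fin n → MvPolynomial (Fin 2) k)
    (l : List ℕ) (hdec : l.IsChain (· > ·)) (hle : ∀ x ∈ l, x ≤ n)
    (ρ : KLR Q l.sum →ₐ[k] Module.End k (TabV k (IsSYT l l.sum)))
    (hρe : ∀ μ, ρ (KLR.e Q μ) = eOpTab k n hn (IsSYT l l.sum) μ)
    (hρx : ∀ p, ρ (KLR.x Q p) = 0)
    (hρt : ∀ j h, ρ (KLR.τ Q j h) = tOpTab k (IsSYT l l.sum) j h) :
    ∃ φ : ConvHead k n hn Q l ≃+ TabV k (IsSYT l l.sum),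
      ∀ (r : KLR Q l.sum) (z : ConvHead k n hn Q l), φ (r • z) = ρ r (φ z) := by
  let _ : Module (KLR Q l.sum) (TabV k (IsSYT l l.sum)) := Module.compHom _ ρ.toRingHom
  have := Finite.of_injective _ (IsSYT.resSeq_injective (N := l.sum) hdec hn hle)
  let v : TabV k (IsSYT l l.sum) := Pi.single (rowTableau l) 1
  have hconn := reflTransGen_swapAdj_of_strictMono (S := rowTableau l) strictMono_rowReading_fin
  have hev : ρ (KLR.e Q (resSeq n hn (rowTableau l).1)) v = v := by
    rw [hρe, eOpTab_single, if_pos rfl]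
  have hxv : ∀ p, ρ (KLR.x Q p) v = 0 := fun p => by rw [hρx, LinearMap.zero_apply]
  have hτv : ∀ (j : ℕ) (h : j + 1 < l.sum), sameBlock l j → ρ (KLR.τ Q j h) v = 0 :=
    fun j h hj => by rw [hρt, tOpTab_single_eq_zero (not_isSYT_swapEnt_rowTableau hj h)]
  obtain ⟨φ⟩ := nonempty_head_equiv (k := k) (I := convIdeal k n hn Q l) (v := v)
    (e := KLR.e Q (resSeq n hn (rowTableau l).1))
    (fun _ => smul_eq_zero_of_mem_convIdeal hev hxv hτv)
    (Pi.single_ne_zero_iff.mpr one_ne_zero)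
    (exists_apply_eq_of_forall_single fun T => exists_apply_single_eq hρt (hconn T))
    (exists_e_mul_sub_algebraMap_mem_convIdeal hdec hle) fun w hw => by
      obtain ⟨a, ha⟩ := exists_apply_eq_single_of_ne_zero hdec hle hρe
        (fun T => exists_apply_single_eq hρt (symm (hconn T))) hw
      refine ⟨a, ?_⟩
      change ρ (KLR.e Q _ * a) w = v
      rw [map_mul, Module.End.mul_apply, ha, hev]
  exact ⟨φ.toAddEquiv, φ.map_smul⟩

theorem sp_is_head_of_convolution_B
    (k : Type) [Field k] (n : ℕ) (hn : 2 ≤ n)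
    (Q : Fin n → Fin n → MvPolynomial (Fin 2) k)
    (hQ : QAdmissible k (AB n) (dB n) Q)
    (l : List ℕ) (hdec : l.Chain' (· > ·)) (hpos : ∀ x ∈ l, 0 < x)
    (hle : ∀ x ∈ l, x ≤ n)
    -- for any action ρ of the quiver Hecke algebra on Sp(b) by the prescribed operators
    (ρ : RingQuot (Rel k Q (Set.univ : Set (Fin l.sum → Fin n))) →ₐ[k]
      Module.End k (TabV k (IsSYT l l.sum)))
    (hρe : ∀ μ : Fin l.sum → Fin n,
      ρ (RingQuot.mkAlgHom k _ (Eg k μ)) = eOpTab k n (by omega) (IsSYT l l.sum) μ)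
    (hρx : ∀ p : Fin l.sum, ρ (RingQuot.mkAlgHom k _ (Xg k p)) = 0)
    (hρt : ∀ (j : ℕ) (h : j + 1 < l.sum),
      ρ (RingQuot.mkAlgHom k _ (Tg k j h)) = tOpTab k (IsSYT l l.sum) j h) :
    -- Sp(b) is isomorphic, as a module over the quiver Hecke algebra, to the head
    -- of the convolution product Sp((λ_ℓ)) ∘ ⋯ ∘ Sp((λ₂)) ∘ Sp((λ₁))
    ∃ φ : ConvHead k n (by omega) Q l ≃+ TabV k (IsSYT l l.sum),
      ∀ (r : RingQuot (Rel k Q (Set.univ : Set (Fin l.sum → Fin n))))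
        (z : ConvHead k n (by omega) Q l),
        φ (r • z) = ρ r (φ z) :=
  sp_is_head_of_convolution_B_general k n (by omega) Q l hdec hle ρ hρe hρx hρt

end QHA
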